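/- arXiv:1710.11219 — 8 statements merged into one kernel-verified Lean document; each statement's English description precedes it below -/
import Mathlib

section
/- For every ℓ ≥ 1 and every coloring c : 2^{<ω} → {0,…,ℓ−1} of the finite binary strings, there exists an infinite ordered variable word over {0,1}, encoded by b : ℕ → {0,1} and nonempty finite sets F_1 < F_2 < ⋯, and a color j < ℓ such that c(W(a)) = j for every k ≥ 0 and every a ∈ {0,1}^k. (The Ordered Variable Word theorem OVW(2,ℓ) for the binary alphabet.) -/
/- Binary strings are `List Bool`, with `false` playing the role of the bit `0`
and `true` the role of the bit `1`. -/

/-- `flipStr σ F` is the binary string of length `|σ|` obtained from `σ` by flipping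
the bit at each position `i ∈ F` with `i < |σ|`. -/
def flipStr (σ : List Bool) (F : Finset ℕ) : List Bool :=
  σ.mapIdx fun i b => if i ∈ F then !b else b

/-- `FinLT A B` says every element of `A` is less than every element of `B`. -/
def FinLT (A B : Finset ℕ) : Prop := ∀ x ∈ A, ∀ y ∈ B, x < y

/-- The instantiation `W(a)` of the infinite ordered variable word encoded by
`b : ℕ → Bool` and `F : ℕ → Finset ℕ` (where `F k` is the set of positions of the
`(k+1)`-st variable): the binary string of length `min (F a.length)` whose `n`-th bit
is `a i` if `n ∈ F i` for some `i < a.length`, and `b n` otherwise. -/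
noncomputable def instWord (b : ℕ → Bool) (F : ℕ → Finset ℕ) (a : List Bool) : List Bool :=
  (List.range (sInf (↑(F a.length) : Set ℕ))).map fun n =>
    if h : ∃ i, i < a.length ∧ n ∈ F i then a.getD (Nat.find h) false else b n

@[reducible] def listSG (α : Type) : Semigroup (List α) where
  mul := fun x y => x ++ y
  mul_assoc := fun x y z => List.append_assoc x y z

attribute [local instance] listSG Ultrafilter.semigroup

theorem exists_min_left {M : Type*} [Nonempty M] [Semigroup M]
    [TopologicalSpace M] [CompactSpace M] [T2Space M]
    (hcont : ∀ r : M, Continuous (· * r)) : ∃ e : M, ∀ x : M, ∃ y : M, y * (x * e) = e := by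
  let S : Set (Set M) :=
    { N | IsClosed N ∧ N.Nonempty ∧ ∀ (x m : M), m ∈ N → x * m ∈ N }
  obtain ⟨N, hN⟩ : ∃ N', Minimal (· ∈ S) N' := by
    obtain ⟨m, -, hm⟩ := zorn_superset_nonempty S (by
      intro c hcs hc hne
      refine ⟨⋂₀ c, ⟨isClosed_sInter fun t ht => (hcs ht).1, ?_, fun x m hm t ht =>
        (hcs ht).2.2 x m (hm t ht)⟩, fun s hs => Set.sInter_subset_of_mem hs⟩
      have : Nonempty c := hne.to_subtype
      rw [Set.sInter_eq_iInter]
      refine IsCompact.nonempty_iInter_of_directed_nonempty_isCompact_isClosed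
        ((↑) : c → Set M) (DirectedOn.directed_val (IsChain.directedOn hc.symm)) ?_ ?_ ?_
      · exact fun i => (hcs i.2).2.1
      · exact fun i => (hcs i.2).1.isCompact
      · exact fun i => (hcs i.2).1) Set.univ
        ⟨isClosed_univ, Set.univ_nonempty, fun _ _ _ => Set.mem_univ _⟩
    exact ⟨m, hm⟩
  obtain ⟨hcl, ⟨e, he⟩, hmul⟩ := hN.prop
  refine ⟨e, fun x => ?_⟩
  have h : Set.range (· * (x * e)) = N := by
    apply hN.eq_of_subset
    · refine ⟨(isCompact_range (hcont _)).isClosed, ⟨_, ⟨e, rfl⟩⟩, ?_⟩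
      rintro y _ ⟨z, rfl⟩
      exact ⟨y * z, mul_assoc _ _ _⟩
    · rintro _ ⟨z, rfl⟩
      exact hmul _ _ (hmul _ _ he)
  rw [← h] at he
  exact he

theorem uf_map_mul {M N : Type*} [Semigroup M] [Semigroup N] (f : M → N)
    (hf : ∀ x y, f (x * y) = f x * f y) (u v : Ultrafilter M) :
    (u * v).map f = u.map f * v.map f := by
  apply Ultrafilter.coe_inj.mp
  apply Filter.ext'
  intro p
  have h1 : (∀ᶠ x in ((u * v).map f : Filter N), p x) ↔
      ∀ᶠ m in (u : Filter M), ∀ᶠ m' in (v : Filter M), p (f (m * m')) := Iff.rfl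
  have h2 : (∀ᶠ x in ((u.map f * v.map f : Ultrafilter N) : Filter N), p x) ↔
      ∀ᶠ m in (u : Filter M), ∀ᶠ m' in (v : Filter M), p (f m * f m') := Iff.rfl
  rw [h1, h2]
  simp only [hf]

/-- substitution -/
def sub (a : Bool) (v : List (Option Bool)) : List Bool := v.map (fun o => o.getD a)

theorem vsub_mul (a : Bool) (u v : List (Option Bool)) : sub a (u * v) = sub a u * sub a v :=
  List.map_append

theorem exists_q : ∃ q : Ultrafilter (List (Option Bool)),
    (∀ᶠ v in (q : Filter (List (Option Bool))), ∃ w, v = none :: w) ∧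
    ∀ a b, q.map (sub a) * q.map (sub b) = q.map (sub a) := by
  obtain ⟨e, he⟩ := exists_min_left (M := Ultrafilter (List Bool))
    Ultrafilter.continuous_mul_left
  let E : Ultrafilter (List (Option Bool)) := e.map (List.map some)
  have hE : ∀ a, E.map (sub a) = e := by
    intro a
    have : sub a ∘ List.map some = id := by
      funext l
      simp [sub, Function.comp_def]
    simp only [E, Ultrafilter.map_map, this, Ultrafilter.map_id]
  let V : Set (List (Option Bool)) := {v | ∃ w, v = none :: w}
  have hVmul : ∀ u v : Ultrafilter (List (Option Bool)), V ∈ u → V ∈ u * v := by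
    intro u v hu
    have : ∀ᶠ m in (u : Filter (List (Option Bool))),
      ∀ᶠ m' in (v : Filter (List (Option Bool))), m * m' ∈ V := by
      filter_upwards [hu] with m hm
      obtain ⟨w, rfl⟩ := hm
      exact Filter.Eventually.of_forall fun m' => ⟨w ++ m', rfl⟩
    exact this
  obtain ⟨q, ⟨u, hu, rfl⟩, hq⟩ := exists_idempotent_in_compact_subsemigroup
    (M := Ultrafilter (List (Option Bool))) Ultrafilter.continuous_mul_left
    ((· * E) '' {u | V ∈ u})
    (by
      refine ⟨_, (pure [none] : Ultrafilter _), ?_, rfl⟩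
      exact Ultrafilter.mem_pure.2 ⟨[], rfl⟩)
    ((ultrafilter_isClosed_basic V).isCompact.image (Ultrafilter.continuous_mul_left E))
    (by
      rintro _ ⟨x, hx, rfl⟩ _ ⟨y, hy, rfl⟩
      exact ⟨x * E * y, hVmul _ _ (hVmul _ _ hx), mul_assoc _ _ _⟩)
  refine ⟨u * E, hVmul _ _ hu, fun a b => ?_⟩
  have key : ∀ a, (u * E).map (sub a) = u.map (sub a) * e := by
    intro a
    rw [uf_map_mul _ (vsub_mul a), hE]
  have idem : (u * E).map (sub b) * (u * E).map (sub b) = (u * E).map (sub b) := by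
    rw [← uf_map_mul _ (vsub_mul b)]
    exact congrArg _ hq
  obtain ⟨y, hy⟩ := he (u.map (sub b))
  rw [← key b] at hy
  rw [key a]
  calc u.map (sub a) * e * (u * E).map (sub b)
      = u.map (sub a) * (y * (u * E).map (sub b)) * (u * E).map (sub b) := by rw [hy]
    _ = u.map (sub a) * (y * ((u * E).map (sub b) * (u * E).map (sub b))) := by
        simp only [mul_assoc]
    _ = _ := by rw [idem, hy]

theorem exists_P (ℓ : ℕ) (c : List Bool → ℕ) (hc : ∀ σ, c σ < ℓ) :
    ∃ j < ℓ, ∃ P : List Bool → Prop, (∀ w, P w → c w = j) ∧ (∃ w, P w) ∧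
      ∀ T : Finset (List Bool), (∀ w ∈ T, P w) → ∃ v : List (Option Bool),
        ∀ w ∈ T, ∀ a, P (w ++ sub a (none :: v)) := by
  obtain ⟨q, hqV, hq⟩ := exists_q
  obtain ⟨j, hj, hjq⟩ : ∃ j ∈ Set.Iio ℓ, {w | c w = j} ∈ q.map (sub false) := by
    rw [← Ultrafilter.finite_biUnion_mem_iff (Set.finite_Iio ℓ)]
    have : (⋃ i ∈ Set.Iio ℓ, {w | c w = i}) = Set.univ := by
      ext w
      simp [hc]
    rw [this]
    exact Filter.univ_mem
  have hmul : ∀ (p : List Bool → Prop) (a b : Bool),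
      (∀ᶠ v in (q : Filter (List (Option Bool))), p (sub a v)) →
      ∀ᶠ v in (q : Filter (List (Option Bool))),
        ∀ᶠ v' in (q : Filter (List (Option Bool))), p (sub a v ++ sub b v') := by
    intro p a b h
    have h1 : ∀ᶠ w in ((q.map (sub a) : Ultrafilter (List Bool)) : Filter (List Bool)), p w := h
    rw [← hq a b] at h1
    exact h1
  let P : List Bool → Prop := fun w => c w = j ∧
    ∀ a, ∀ᶠ v in (q : Filter (List (Option Bool))), c (w ++ sub a v) = j
  have hjq' : ∀ᶠ v in (q : Filter (List (Option Bool))), c (sub false v) = j := hjq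
  refine ⟨j, hj, P, fun w h => h.1, ?_, ?_⟩
  · have h : ∀ᶠ v in (q : Filter (List (Option Bool))), P (sub false v) := by
      refine hjq'.and ?_
      rw [Filter.eventually_all]
      exact fun a => hmul (fun w => c w = j) false a hjq'
    obtain ⟨v, hv⟩ := h.exists
    exact ⟨_, hv⟩
  · intro T hT
    have h : ∀ᶠ v in (q : Filter (List (Option Bool))), ∀ w ∈ T, ∀ a, P (w ++ sub a v) := by
      rw [Filter.eventually_all_finset]
      intro w hw
      rw [Filter.eventually_all]
      intro a
      refine ((hT w hw).2 a).and ?_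
      rw [Filter.eventually_all]
      intro b
      have := hmul (fun x => c (w ++ x) = j) a b ((hT w hw).2 a)
      simpa only [List.append_assoc] using this
    obtain ⟨v, hv, w, rfl⟩ := (h.and hqV).exists
    exact ⟨w, hv⟩

theorem exists_seq (ℓ : ℕ) (c : List Bool → ℕ) (hc : ∀ σ, c σ < ℓ) :
    ∃ j < ℓ, ∃ (w₀ : List Bool) (v : ℕ → List (Option Bool)),
      ∀ R : List Bool → List Bool, R [] = w₀ →
        (∀ a t, R (a ++ [t]) = R a ++ sub t (none :: v a.length)) → ∀ a, c (R a) = j := by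
  obtain ⟨j, hj, P, hP, ⟨w₀, hw₀⟩, hT⟩ := exists_P ℓ c hc
  have hT' : ∀ T : Finset (List Bool), ∃ v : List (Option Bool), (∀ w ∈ T, P w) →
        ∀ w ∈ T, ∀ a, P (w ++ sub a (none :: v)) := by
    intro T
    by_cases h : ∀ w ∈ T, P w
    · obtain ⟨v, hv⟩ := hT T h
      exact ⟨v, fun _ => hv⟩
    · exact ⟨[], fun h' => absurd h' h⟩
  choose V hV using hT'
  let T : ℕ → Finset (List Bool) := fun k => Nat.rec {w₀}
    (fun _ S => S.biUnion fun w => {w ++ sub false (none :: V S), w ++ sub true (none :: V S)}) k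
  have hTs : ∀ k, T (k + 1) = (T k).biUnion fun w =>
    {w ++ sub false (none :: V (T k)), w ++ sub true (none :: V (T k))} := fun k => rfl
  have hTP : ∀ k, ∀ w ∈ T k, P w := by
    intro k
    induction k with
    | zero => intro w hw; rw [Finset.mem_singleton.1 hw]; exact hw₀
    | succ k ih =>
      intro w hw
      rw [hTs, Finset.mem_biUnion] at hw
      obtain ⟨x, hx, hw⟩ := hw
      rcases Finset.mem_insert.1 hw with rfl | hw
      · exact hV _ ih x hx _
      · rw [Finset.mem_singleton.1 hw]
        exact hV _ ih x hx _
  refine ⟨j, hj, w₀, fun k => V (T k), fun R h0 hs a => hP _ (hTP a.length _ ?_)⟩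
  induction a using List.reverseRecOn with
  | nil => rw [h0]; exact Finset.mem_singleton_self _
  | append_singleton a t ih =>
    rw [hs, List.length_append, List.length_singleton, hTs, Finset.mem_biUnion]
    refine ⟨_, ih, ?_⟩
    cases t <;> simp

theorem ovw_two (ℓ : ℕ) (hℓ : 1 ≤ ℓ) (c : List Bool → ℕ) (hc : ∀ σ, c σ < ℓ) :
    ∃ (b : ℕ → Bool) (F : ℕ → Finset ℕ),
      (∀ k, (F k).Nonempty) ∧ (∀ k, FinLT (F k) (F (k + 1))) ∧
      ∃ j < ℓ, ∀ a : List Bool, c (instWord b F a) = j := by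
  obtain ⟨j, hj, w₀, v, hR⟩ := exists_seq ℓ c hc
  let p : ℕ → ℕ := fun k => Nat.rec w₀.length (fun k n => n + ((v k).length + 1)) k
  have p0 : p 0 = w₀.length := rfl
  have ps : ∀ k, p (k + 1) = p k + ((v k).length + 1) := fun k => rfl
  have pmono : StrictMono p := strictMono_nat_of_lt_succ fun k => by rw [ps]; omega
  let F : ℕ → Finset ℕ := fun k => (Finset.range ((v k).length + 1)).image (p k + ·) |>.filter
    fun n => (none :: v k)[n - p k]? = some none
  have hF : ∀ k n, n ∈ F k ↔ ∃ m, n = p k + m ∧ (none :: v k)[m]? = some none := by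
    intro k n
    simp only [F, Finset.mem_filter, Finset.mem_image, Finset.mem_range]
    constructor
    · rintro ⟨⟨m, hm, rfl⟩, h⟩
      exact ⟨m, rfl, by simpa using h⟩
    · rintro ⟨m, rfl, h⟩
      refine ⟨⟨m, ?_, rfl⟩, by simpa using h⟩
      have := (List.getElem?_eq_some_iff.1 h).1
      simpa using this
  have hFl : ∀ k n, n ∈ F k → p k ≤ n ∧ n < p (k + 1) := by
    intro k n h
    obtain ⟨m, rfl, hm⟩ := (hF k n).1 h
    have := (List.getElem?_eq_some_iff.1 hm).1
    rw [ps]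
    simp at this
    omega
  have hFp : ∀ k, p k ∈ F k := fun k => (hF k _).2 ⟨0, rfl, by simp⟩
  have hFinf : ∀ k, sInf (↑(F k) : Set ℕ) = p k := by
    intro k
    apply le_antisymm
    · exact Nat.sInf_le (Finset.mem_coe.2 (hFp k))
    · exact (hFl k _ (Finset.mem_coe.1 (Nat.sInf_mem (s := (↑(F k) : Set ℕ)) ⟨_, hFp k⟩))).1
  have hFu : ∀ k i n, p k ≤ n → n < p (k + 1) → n ∈ F i → i = k := by
    intro k i n h1 h2 h3
    obtain ⟨h4, h5⟩ := hFl i n h3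
    have a1 : i < k + 1 := pmono.lt_iff_lt.1 (lt_of_le_of_lt h4 h2)
    have a2 : k < i + 1 := pmono.lt_iff_lt.1 (lt_of_le_of_lt h1 h5)
    omega
  -- the constant letters
  have hb : ∃ b : ℕ → Bool, (∀ n (h : n < w₀.length), b n = w₀[n]) ∧
      ∀ k m t, (none :: v k)[m]? = some (some t) → b (p k + m) = t := by
    classical
    let b : ℕ → Bool := fun n => if h : n < w₀.length then w₀[n] else
      if ∃ k m, n = p k + m ∧ (none :: v k)[m]? = some (some true) then true else false
    refine ⟨b, fun n h => by simp [b, h], fun k m t h => ?_⟩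
    have hge : ¬ p k + m < w₀.length := by
      have := pmono.monotone (Nat.zero_le k)
      rw [p0] at this
      omega
    have hlt := (List.getElem?_eq_some_iff.1 h).1
    simp only [b, dif_neg hge]
    cases t with
    | true => rw [if_pos ⟨k, m, rfl, h⟩]
    | false =>
      rw [if_neg]
      rintro ⟨k', m', he, h'⟩
      have hlt' := (List.getElem?_eq_some_iff.1 h').1
      simp only [List.length_cons] at hlt hlt'
      have a1 : k < k' + 1 := pmono.lt_iff_lt.1 (by rw [ps]; omega)
      have a2 : k' < k + 1 := pmono.lt_iff_lt.1 (by rw [ps]; omega)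
      obtain rfl : k = k' := by omega
      obtain rfl : m = m' := by omega
      rw [h] at h'
      simp at h'
  obtain ⟨b, hb0, hbs⟩ := hb
  refine ⟨b, F, fun k => ⟨_, hFp k⟩, fun k x hx y hy =>
    lt_of_lt_of_le (hFl k x hx).2 (hFl _ y hy).1, j, hj, ?_⟩
  apply hR
  · simp only [instWord, List.length_nil, hFinf, p0]
    apply List.ext_getElem
    · simp
    · intro n h1 h2
      simp [hb0 n h2]
  · intro a t
    simp only [instWord, hFinf, List.length_append, List.length_singleton]
    rw [ps, List.range_add, List.map_append]
    congr 1
    · apply List.map_congr_left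
      intro n hn
      have hn : n < p a.length := List.mem_range.1 hn
      by_cases h : ∃ i, i < a.length ∧ n ∈ F i
      · have h' : ∃ i, i < a.length + 1 ∧ n ∈ F i := by
          obtain ⟨i, hi, h⟩ := h
          exact ⟨i, by omega, h⟩
        rw [dif_pos h, dif_pos h']
        have e : Nat.find h' = Nat.find h := by
          obtain ⟨h1, h2⟩ := hFl _ _ (Nat.find_spec h).2
          exact hFu _ _ n h1 h2 (Nat.find_spec h').2
        rw [e, List.getD_append _ _ _ _ (Nat.find_spec h).1]
      · have h' : ¬ ∃ i, i < a.length + 1 ∧ n ∈ F i := by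
          rintro ⟨i, hi, hm⟩
          have : i < a.length := pmono.lt_iff_lt.1 (lt_of_le_of_lt (hFl i n hm).1 hn)
          exact h ⟨i, this, hm⟩
        rw [dif_neg h, dif_neg h']
    · rw [List.map_map]
      apply List.ext_getElem
      · simp [sub]
      · intro m h1 h2
        have hm : m < (none :: v a.length).length := by simpa [sub] using h2
        have hm' : m < (v a.length).length + 1 := by simpa using hm
        simp only [List.getElem_map, List.getElem_range, Function.comp_apply, sub]
        have hlo : p a.length ≤ p a.length + m := by omega
        have hhi : p a.length + m < p (a.length + 1) := by rw [ps]; omega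
        rcases hx : (none :: v a.length)[m] with _ | s
        · have h' : ∃ i, i < a.length + 1 ∧ p a.length + m ∈ F i :=
            ⟨a.length, by omega, (hF _ _).2 ⟨m, rfl, List.getElem?_eq_some_iff.2 ⟨hm, hx⟩⟩⟩
          rw [dif_pos h', hFu _ _ _ hlo hhi (Nat.find_spec h').2]
          simp
        · have hs := List.getElem?_eq_some_iff.2 ⟨hm, hx⟩
          have h' : ¬ ∃ i, i < a.length + 1 ∧ p a.length + m ∈ F i := by
            rintro ⟨i, -, hi⟩
            obtain rfl := hFu _ _ _ hlo hhi hi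
            obtain ⟨m', he, h⟩ := (hF _ _).1 hi
            obtain rfl : m = m' := by omega
            rw [hs] at h
            simp at h
          rw [dif_neg h', hbs _ _ _ hs]
          simp
end

section
/- For every ℓ ≥ 1 and every sequence c_0, c_1, c_2, … of colorings c_i : 2^{<ω} → {0,…,ℓ−1} of the finite binary strings, there exists an infinite ordered variable word over {0,1}, encoded by b : ℕ → {0,1} and nonempty finite sets F_1 < F_2 < ⋯, such that for every i ≥ 0 and every b̄ ∈ {0,1}^i there is a color j < ℓ with c_i(W(b̄a)) = j for every k ≥ 0 and every a ∈ {0,1}^k, where b̄a ∈ {0,1}^{i+k} denotes the concatenation of b̄ and a. (The sequential Ordered Variable Word theorem Seq-OVW(2,ℓ).) -/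
open Filter

attribute [local instance] Ultrafilter.mul Ultrafilter.semigroup

theorem ovw_min_idem {M : Type*} [Nonempty M] [Semigroup M]
    [TopologicalSpace M] [CompactSpace M] [T2Space M]
    (hcont : ∀ r : M, Continuous (· * r)) :
    ∃ p : M, p * p = p ∧ ∀ q, q * q = q → p * q = q → q * p = q → q = p := by
  let S : Set (Set M) :=
    { N | IsClosed N ∧ N.Nonempty ∧ ∀ m, ∀ x ∈ N, m * x ∈ N }
  obtain ⟨N, hN⟩ : ∃ N, Minimal (· ∈ S) N := by
    refine zorn_superset _ fun c hcs hc => ?_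
    refine ⟨⋂₀ c, ⟨isClosed_sInter fun t ht => (hcs ht).1, ?_, ?_⟩, fun s hs =>
      Set.sInter_subset_of_mem hs⟩
    · obtain rfl | hcn := c.eq_empty_or_nonempty
      · rw [Set.sInter_empty]
        exact Set.univ_nonempty
      have := hcn.coe_sort
      exact IsCompact.nonempty_sInter_of_directed_nonempty_isCompact_isClosed
        (IsChain.directedOn hc.symm) (fun U hU => (hcs hU).2.1)
        (fun U hU => (hcs hU).1.isCompact) (fun U hU => (hcs hU).1)
    · intro m x hx t ht
      exact (hcs ht).2.2 m x (hx t ht)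
  obtain ⟨hcl, hne, hmul⟩ := hN.prop
  obtain ⟨p, hpN, hp⟩ := exists_idempotent_in_compact_subsemigroup hcont N hne hcl.isCompact
    (fun x _ y hy => hmul x y hy)
  refine ⟨p, hp, fun q hq hpq hqp => ?_⟩
  have hqN : q ∈ N := hqp ▸ hmul q p hpN
  have heq : (· * q) '' Set.univ = N := by
    apply hN.eq_of_subset
    · refine ⟨(hcont q).isClosedMap _ isClosed_univ, ⟨_, ⟨q, trivial, rfl⟩⟩, ?_⟩
      rintro m _ ⟨x, -, rfl⟩
      exact ⟨m * x, trivial, mul_assoc _ _ _⟩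
    · rintro _ ⟨x, -, rfl⟩
      exact hmul _ _ hqN
  rw [← heq] at hpN
  obtain ⟨x, -, hx⟩ := hpN
  have hx' : x * q = p := hx
  calc q = p * q := hpq.symm
    _ = x * (q * q) := by rw [← hx', mul_assoc]
    _ = p := by rw [hq, hx']

/-- Strings form a semigroup under concatenation. -/
abbrev ovwSemigroup (α : Type) : Semigroup (List α) where
  mul x y := x ++ y
  mul_assoc := List.append_assoc

attribute [local instance] ovwSemigroup

theorem ovw_mul_def {α : Type} (x y : List α) : x * y = x ++ y := rfl

theorem ovw_map_mul {α β : Type} (f : List α → List β)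
    (hf : ∀ x y, f (x ++ y) = f x ++ f y) (U V : Ultrafilter (List α)) :
    Ultrafilter.map f (U * V) = Ultrafilter.map f U * Ultrafilter.map f V := by
  apply Ultrafilter.coe_inj.mp
  apply Filter.ext'
  intro P
  rw [Ultrafilter.eventually_mul]
  simp only [Ultrafilter.coe_map, eventually_map]
  rw [Ultrafilter.eventually_mul]
  simp only [ovw_mul_def, hf]

/-- Substitution of a letter for the variable. -/
def ovwSubst (e : Bool) (u : List (Option Bool)) : List Bool := u.map (fun o => o.getD e)

/-- The constant word before the first variable. -/
def ovwInit : List (Option Bool) → List Bool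
  | [] => []
  | none :: _ => []
  | some x :: u => x :: ovwInit u

theorem ovwInit_append (x : List Bool) (u : List (Option Bool)) :
    ovwInit (x.map some ++ u) = x ++ ovwInit u := by
  induction x with
  | nil => rfl
  | cons a x ih => simp [ovwInit, ih]

theorem ovwInit_split (u : List (Option Bool)) (h : none ∈ u) :
    ∃ t, u = (ovwInit u).map some ++ none :: t := by
  induction u with
  | nil => simp at h
  | cons a u ih =>
    cases a with
    | none => exact ⟨u, by simp [ovwInit]⟩
    | some x =>
      obtain ⟨t, ht⟩ := ih (by simpa using h)
      refine ⟨t, ?_⟩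
      simp only [ovwInit, List.map_cons, List.cons_append]
      rw [← ht]

theorem ovw_ultra : ∃ q : Ultrafilter (List (Option Bool)),
    (∀ᶠ u in (q : Filter (List (Option Bool))), none ∈ u) ∧
    ∀ e, Ultrafilter.map (ovwSubst e) q * Ultrafilter.map ovwInit q
      = Ultrafilter.map ovwInit q := by
  obtain ⟨p, hp, hmin⟩ := ovw_min_idem (M := Ultrafilter (List Bool))
    (Ultrafilter.continuous_mul_left)
  let ι : List Bool → List (Option Bool) := fun x => x.map some
  have hι : ∀ x y, ι (x ++ y) = ι x ++ ι y := fun x y => List.map_append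
  let p' := Ultrafilter.map ι p
  have hp' : p' * p' = p' := by
    rw [← ovw_map_mul ι hι, hp]
  let V : Set (Ultrafilter (List (Option Bool))) := {U | {u | none ∈ u} ∈ U}
  have hVl : ∀ U W, U ∈ V → U * W ∈ V := by
    intro U W hU
    change ∀ᶠ u in ((U * W : Ultrafilter (List (Option Bool))) : Filter (List (Option Bool))), none ∈ u
    rw [Ultrafilter.eventually_mul]
    have hU' : ∀ᶠ u in (U : Filter (List (Option Bool))), none ∈ u := hU
    filter_upwards [hU'] with u hu
    exact Eventually.of_forall fun w => List.mem_append_left _ hu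
  have hVr : ∀ U W, W ∈ V → U * W ∈ V := by
    intro U W hU
    change ∀ᶠ u in ((U * W : Ultrafilter (List (Option Bool))) : Filter (List (Option Bool))), none ∈ u
    rw [Ultrafilter.eventually_mul]
    have hU' : ∀ᶠ u in (W : Filter (List (Option Bool))), none ∈ u := hU
    refine Eventually.of_forall fun w => ?_
    filter_upwards [hU'] with u hu
    exact List.mem_append_right _ hu
  have hVc : IsClosed V := ultrafilter_isClosed_basic _
  obtain ⟨e, ⟨x, hx, hxe⟩, he⟩ := exists_idempotent_in_compact_subsemigroup
    (Ultrafilter.continuous_mul_left (M := List (Option Bool))) ((· * p') '' V)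
    (Set.Nonempty.image _ ⟨pure [none], by simp [V]⟩)
    (hVc.isCompact.image (Ultrafilter.continuous_mul_left p')) (by
      rintro _ ⟨a, ha, rfl⟩ _ ⟨b, hb, rfl⟩
      exact ⟨a * p' * b, hVr _ _ hb, mul_assoc _ _ _⟩)
  have hxe' : x * p' = e := hxe
  have hep : e * p' = e := by rw [← hxe', mul_assoc, hp']
  let q := p' * e
  have hqp : q * p' = q := by rw [mul_assoc, hep]
  have hpq : p' * q = q := by rw [← mul_assoc, hp']
  have hqq : q * q = q := by
    change p' * e * (p' * e) = p' * e
    rw [mul_assoc, ← mul_assoc e, hep, he]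
  have hqV : q ∈ V := hVr _ _ (hxe' ▸ hVl _ _ hx)
  refine ⟨q, hqV, fun a => ?_⟩
  have hs : ∀ x y, ovwSubst a (x ++ y) = ovwSubst a x ++ ovwSubst a y :=
    fun x y => List.map_append
  have hsp : Ultrafilter.map (ovwSubst a) p' = p := by
    have : ovwSubst a ∘ ι = id := by
      funext x
      simp [ovwSubst, ι, Function.comp_def]
    change Ultrafilter.map (ovwSubst a) (Ultrafilter.map ι p) = p
    rw [Ultrafilter.map_map, this, Ultrafilter.map_id]
  have hφ : Ultrafilter.map (ovwSubst a) q = p := by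
    apply hmin
    · rw [← ovw_map_mul _ hs, hqq]
    · rw [← hsp, ← ovw_map_mul _ hs, hpq]
    · conv_lhs => rw [← hsp]
      rw [← ovw_map_mul _ hs, hqp]
  rw [hφ]
  conv_rhs => rw [← hpq]
  apply Ultrafilter.coe_inj.mp
  apply Filter.ext'
  intro P
  rw [Ultrafilter.eventually_mul]
  simp only [Ultrafilter.coe_map, eventually_map]
  rw [Ultrafilter.eventually_mul]
  simp only [p', Ultrafilter.coe_map, eventually_map, ovw_mul_def, ι, ovwInit_append]

theorem ovw_key (ℓ : ℕ) (c : ℕ → List Bool → ℕ) (hc : ∀ i σ, c i σ < ℓ) :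
    ∃ j : ℕ → List Bool → ℕ, (∀ i P, j i P < ℓ) ∧
      ∀ (D : Finset (List Bool)) (n : ℕ), ∃ u : List (Option Bool), none ∈ u ∧
        ∀ P ∈ D, ∀ i ≤ n, c i (P ++ ovwInit u) = j i P ∧
          ∀ e, j i (P ++ ovwSubst e u) = j i P := by
  obtain ⟨q, hqV, hq⟩ := ovw_ultra
  set r := Ultrafilter.map ovwInit q with hr
  have hlim : ∀ i P, ∃ k, k < ℓ ∧ ∀ᶠ x in (r : Filter _), c i (P ++ x) = k := by
    intro i P
    have h : ∀ᶠ x in (r : Filter _), ∃ k ∈ Finset.range ℓ, c i (P ++ x) = k :=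
      Eventually.of_forall fun x => ⟨_, Finset.mem_range.2 (hc _ _), rfl⟩
    have := (Ultrafilter.eventually_exists_mem_iff (Finset.finite_toSet (Finset.range ℓ))).1 h
    obtain ⟨k, hk, hk'⟩ := this
    exact ⟨k, by simpa using hk, hk'⟩
  choose j hj hjr using hlim
  refine ⟨j, hj, fun D n => ?_⟩
  have h1 : ∀ᶠ u in (q : Filter (List (Option Bool))), ∀ P ∈ D, ∀ i ∈ Finset.range (n + 1),
      c i (P ++ ovwInit u) = j i P ∧ ∀ e, j i (P ++ ovwSubst e u) = j i P := by
    rw [Filter.eventually_all_finset]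
    intro P _
    rw [Filter.eventually_all_finset]
    intro i _
    refine Eventually.and ?_ ?_
    · have := hjr i P
      rw [hr, Ultrafilter.coe_map, eventually_map] at this
      exact this
    · rw [Filter.eventually_all]
      intro e
      have h := hjr i P
      rw [← hq e, Ultrafilter.eventually_mul] at h
      replace h : ∀ᶠ u in (q : Filter (List (Option Bool))), ∀ᶠ x in (r : Filter (List Bool)),
          c i (P ++ ovwSubst e u * x) = j i P := h
      filter_upwards [h] with u hu
      obtain ⟨x, hx1, hx2⟩ := (hu.and (hjr i (P ++ ovwSubst e u))).exists
      rw [← hx1, ← hx2, ovw_mul_def, List.append_assoc]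
  obtain ⟨u, hu1, hu2⟩ := (hqV.and h1).exists
  exact ⟨u, hu1, fun P hP i hi => hu2 P hP i (Finset.mem_range.2 (by omega))⟩

/-- Concatenation of the first `n` variable words. -/
def ovwU (u : ℕ → List (Option Bool)) : ℕ → List (Option Bool)
  | 0 => []
  | n + 1 => ovwU u n ++ u n

/-- Concatenation of the first `n` variable words, instantiated by `α`. -/
def ovwP (u : ℕ → List (Option Bool)) (α : ℕ → Bool) : ℕ → List Bool
  | 0 => []
  | n + 1 => ovwP u α n ++ ovwSubst (α n) (u n)

theorem ovwP_congr (u : ℕ → List (Option Bool)) (α β : ℕ → Bool) (n : ℕ)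
    (h : ∀ i < n, α i = β i) : ovwP u α n = ovwP u β n := by
  induction n with
  | zero => rfl
  | succ n ih =>
    simp only [ovwP]
    rw [ih (fun i hi => h i (by omega)), h n (by omega)]

theorem ovw_encode (u : ℕ → List (Option Bool)) (hu : ∀ n, none ∈ u n) :
    ∃ (b : ℕ → Bool) (F : ℕ → Finset ℕ),
      (∀ k, (F k).Nonempty) ∧ (∀ k, FinLT (F k) (F (k + 1))) ∧
      ∀ a : List Bool, instWord b F a =
        ovwP u (fun n => a.getD n false) a.length ++ ovwInit (u a.length) := by
  let s : ℕ → ℕ := fun n => (ovwU u n).length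
  have hs : ∀ n, s (n + 1) = s n + (u n).length := fun n => by simp [s, ovwU]
  have hpos : ∀ n, 0 < (u n).length := fun n => List.length_pos_of_mem (hu n)
  have hsm : StrictMono s := strictMono_nat_of_lt_succ fun n => by
    have := hs n
    have := hpos n
    omega
  let w : ℕ → Option Bool := fun m => (ovwU u (m + 1)).getD m none
  have hpre : ∀ n m, n ≤ m → ovwU u n <+: ovwU u m := by
    intro n m h
    induction m, h using Nat.le_induction with
    | base => exact List.prefix_rfl
    | succ m _ ih => exact ih.trans (List.prefix_append _ _)
  have hw : ∀ n m, m < s n → (ovwU u n)[m]? = some (w m) := by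
    intro n m h
    have h2 : m < s (m + 1) := lt_of_lt_of_le (Nat.lt_succ_self m) (hsm.id_le _)
    have e1 : (ovwU u (m + 1))[m]? = some (w m) := by
      simp only [w, List.getD_eq_getElem?_getD]
      rw [List.getElem?_eq_getElem h2]
      rfl
    rw [← e1]
    rcases le_total n (m + 1) with hle | hle
    · obtain ⟨t, ht⟩ := hpre _ _ hle
      rw [← ht, List.getElem?_append_left h]
    · obtain ⟨t, ht⟩ := hpre _ _ hle
      rw [← ht, List.getElem?_append_left h2]
  have hwu : ∀ n i, i < (u n).length → (u n)[i]? = some (w (s n + i)) := by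
    intro n i hi
    rw [← hw (n + 1) (s n + i) (by rw [hs]; omega)]
    simp only [ovwU]
    rw [List.getElem?_append_right (by simp [s])]
    simp [s]
  let F : ℕ → Finset ℕ := fun n => (Finset.Ico (s n) (s (n + 1))).filter (fun m => w m = none)
  let b : ℕ → Bool := fun m => (w m).getD false
  have hF : ∀ n m, m ∈ F n ↔ (s n ≤ m ∧ m < s (n + 1)) ∧ w m = none := fun n m => by
    simp [F]
  have huniq : ∀ n k m, s n ≤ m → m < s (n + 1) → m ∈ F k → k = n := by
    intro n k m h1 h2 h3
    obtain ⟨⟨h3, h4⟩, -⟩ := (hF _ _).1 h3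
    have := hsm.lt_iff_lt.1 (h1.trans_lt h4)
    have := hsm.lt_iff_lt.1 (h3.trans_lt h2)
    omega
  -- first variable position
  have hinit : ∀ n, ∃ t, u n = (ovwInit (u n)).map some ++ none :: t :=
    fun n => ovwInit_split _ (hu n)
  have hlen : ∀ n, (ovwInit (u n)).length < (u n).length := by
    intro n
    obtain ⟨t, ht⟩ := hinit n
    have := congrArg List.length ht
    simp at this
    omega
  have hfirst : ∀ n, s n + (ovwInit (u n)).length ∈ F n := by
    intro n
    have h1 := hlen n
    refine (hF _ _).2 ⟨⟨by omega, by rw [hs]; omega⟩, ?_⟩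
    have := hwu n _ h1
    obtain ⟨t, ht⟩ := hinit n
    rw [ht] at this
    rw [List.getElem?_append_right (by simp [← ht])] at this
    simp [← ht] at this
    exact this.symm
  have hbefore : ∀ n i, (hi : i < (ovwInit (u n)).length) →
      w (s n + i) = some ((ovwInit (u n))[i]) := by
    intro n i hi
    have := hwu n i (hi.trans (hlen n))
    obtain ⟨t, ht⟩ := hinit n
    rw [ht] at this
    rw [List.getElem?_append_left (by simpa [← ht] using hi)] at this
    simp only [List.getElem?_map, List.getElem?_eq_getElem hi, Option.map_some] at this
    exact (Option.some.inj this).symm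
  have hsInf : ∀ n, sInf (↑(F n) : Set ℕ) = s n + (ovwInit (u n)).length := by
    intro n
    apply IsLeast.csInf_eq
    refine ⟨hfirst n, fun m hm => ?_⟩
    obtain ⟨⟨h3, h4⟩, h5⟩ := (hF _ _).1 hm
    by_contra hlt
    push Not at hlt
    have := hbefore n (m - s n) (by omega)
    rw [show s n + (m - s n) = m by omega, h5] at this
    cases this
  refine ⟨b, F, fun k => ⟨_, hfirst k⟩, ?_, ?_⟩
  · intro k x hx y hy
    exact (((hF _ _).1 hx).1.2).trans_le ((hF _ _).1 hy).1.1
  intro a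
  set α : ℕ → Bool := fun n => a.getD n false with hα
  set k := a.length with hk
  unfold instWord
  rw [← hk, hsInf]
  set β : ℕ → Bool := fun n =>
    if h : ∃ i, i < k ∧ n ∈ F i then a.getD (Nat.find h) false else b n with hβ
  have hβn : ∀ n i, n < k → i < (u n).length → β (s n + i) = (w (s n + i)).getD (α n) := by
    intro n i hn hi
    have hlo : s n ≤ s n + i := by omega
    have hhi : s n + i < s (n + 1) := by rw [hs]; omega
    cases hwm : w (s n + i) with
    | none =>
      have h : ∃ j, j < k ∧ s n + i ∈ F j := ⟨n, hn, (hF _ _).2 ⟨⟨hlo, hhi⟩, hwm⟩⟩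
      simp only [hβ]
      rw [dif_pos h, huniq n _ _ hlo hhi (Nat.find_spec h).2]
      rfl
    | some x =>
      have h : ¬ ∃ j, j < k ∧ s n + i ∈ F j := by
        rintro ⟨j, _, hj⟩
        have := ((hF _ _).1 hj).2
        rw [hwm] at this
        cases this
      simp only [hβ]
      rw [dif_neg h]
      simp [b, hwm]
  have hβk : ∀ i, (hi : i < (ovwInit (u k)).length) → β (s k + i) = (ovwInit (u k))[i] := by
    intro i hi
    have hwm := hbefore k i hi
    have h : ¬ ∃ j, j < k ∧ s k + i ∈ F j := by
      rintro ⟨j, _, hj⟩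
      have := ((hF _ _).1 hj).2
      rw [hwm] at this
      cases this
    simp only [hβ]
    rw [dif_neg h]
    simp [b, hwm]
  have hPn : ∀ n, n ≤ k → (List.range (s n)).map β = ovwP u α n := by
    intro n hn
    induction n with
    | zero => simp [s, ovwU, ovwP]
    | succ n ih =>
      rw [hs, List.range_add, List.map_append, ih (by omega)]
      simp only [ovwP]
      congr 1
      apply List.ext_getElem
      · simp [ovwSubst]
      · intro i h1 h2
        have hi : i < (u n).length := by simpa using h1
        have := hwu n i hi
        rw [List.getElem?_eq_getElem hi] at this
        simp [ovwSubst, hβn n i (by omega) hi, Option.some.inj this]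
  rw [List.range_add, List.map_append, hPn k le_rfl]
  congr 1
  apply List.ext_getElem
  · simp
  · intro i h1 h2
    simp [hβk i h2]

/-- The sequential Ordered Variable Word theorem `Seq-OVW(2,ℓ)`. -/
theorem seq_ovw_two (ℓ : ℕ) (hℓ : 1 ≤ ℓ) (c : ℕ → List Bool → ℕ)
    (hc : ∀ i σ, c i σ < ℓ) :
    ∃ (b : ℕ → Bool) (F : ℕ → Finset ℕ),
      (∀ k, (F k).Nonempty) ∧ (∀ k, FinLT (F k) (F (k + 1))) ∧
      ∀ bbar : List Bool, ∃ j < ℓ,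
        ∀ a : List Bool, c bbar.length (instWord b F (bbar ++ a)) = j := by
  obtain ⟨j, hj, hkey⟩ := ovw_key ℓ c hc
  choose g hg1 hg2 using hkey
  let D : ℕ → Finset (List Bool) := fun n => Nat.rec {[]}
    (fun n D => D.image (fun P => P ++ ovwSubst false (g D n)) ∪
      D.image (fun P => P ++ ovwSubst true (g D n))) n
  let u : ℕ → List (Option Bool) := fun n => g (D n) n
  have hD : ∀ n, D (n + 1) = (D n).image (fun P => P ++ ovwSubst false (u n)) ∪
      (D n).image (fun P => P ++ ovwSubst true (u n)) := fun n => rfl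
  have hPD : ∀ α n, ovwP u α n ∈ D n := by
    intro α n
    induction n with
    | zero => simp [ovwP, D]
    | succ n ih =>
      rw [hD, Finset.mem_union]
      simp only [ovwP]
      cases α n with
      | false => exact Or.inl (Finset.mem_image.2 ⟨_, ih, rfl⟩)
      | true => exact Or.inr (Finset.mem_image.2 ⟨_, ih, rfl⟩)
  have hjP : ∀ α i n, i ≤ n → j i (ovwP u α n) = j i (ovwP u α i) := by
    intro α i n h
    induction n, h using Nat.le_induction with
    | base => rfl
    | succ n hin ih =>
      rw [← ih]
      exact (hg2 (D n) n _ (hPD α n) i hin).2 (α n)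
  obtain ⟨b, F, h1, h2, h3⟩ := ovw_encode u (fun n => hg1 _ _)
  refine ⟨b, F, h1, h2, fun bbar => ?_⟩
  refine ⟨j bbar.length (ovwP u (fun n => bbar.getD n false) bbar.length), hj _ _, fun a => ?_⟩
  have hle : bbar.length ≤ (bbar ++ a).length := by simp
  rw [h3, (hg2 (D _) _ _ (hPD _ _) _ hle).1, hjP _ _ _ hle]
  congr 1
  apply ovwP_congr
  intro i hi
  simp [List.getD_eq_getElem?_getD, List.getElem?_append_left hi]
end

section
/- Fix ℓ ≥ 1. Suppose the Finite Union Theorem FUT_ℓ holds, i.e., for every coloring d : 𝒫_fin(ℕ) → {0,…,ℓ−1} there exist an IP collection 𝓘 and a color i < ℓ such that d(S) = i for all S ∈ 𝓘. Then the statement WFUT²_ℓ holds: for every coloring f : 𝒫_fin(ℕ) × ℕ → {0,…,ℓ−1} there exist an IP collection 𝓙 and a color i < ℓ such that f(S, min T) = i for every S, T ∈ 𝓙 with S < T. -/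
/-- An IP collection: an infinite family of nonempty finite subsets of `ℕ`, closed under
unions of finitely many (at least one) of its members, and containing an infinite
subfamily of pairwise disjoint sets. -/
def IsIPCollection (I : Set (Finset ℕ)) : Prop :=
  I.Infinite ∧ (∀ S ∈ I, S.Nonempty) ∧
  (∀ 𝓕 : Finset (Finset ℕ), 𝓕.Nonempty → ↑𝓕 ⊆ I → 𝓕.sup id ∈ I) ∧
  ∃ D ⊆ I, D.Infinite ∧ D.Pairwise fun S T => Disjoint S T

/-- `FUT_ℓ` implies `WFUT²_ℓ`. -/
theorem fut_implies_wfut_two (ℓ : ℕ) (hℓ : 1 ≤ ℓ)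
    (fut : ∀ d : Finset ℕ → ℕ, (∀ S : Finset ℕ, S.Nonempty → d S < ℓ) →
      ∃ (I : Set (Finset ℕ)) (i : ℕ), IsIPCollection I ∧ i < ℓ ∧ ∀ S ∈ I, d S = i) :
    ∀ f : Finset ℕ → ℕ → ℕ, (∀ (S : Finset ℕ) (n : ℕ), S.Nonempty → f S n < ℓ) →
      ∃ (J : Set (Finset ℕ)) (i : ℕ), IsIPCollection J ∧ i < ℓ ∧
        ∀ S ∈ J, ∀ T ∈ J, FinLT S T → f S (sInf (↑T : Set ℕ)) = i := by
  intro f hf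
  classical
  -- limit colours
  have hd : ∀ S : Finset ℕ, ∃ c : ℕ, S.Nonempty →
      (c < ℓ ∧ ∀ᶠ n in (Filter.hyperfilter ℕ : Filter ℕ), f S n = c) := by
    intro S
    by_cases hS : S.Nonempty
    · have hmem : Set.Iio ℓ ∈ (Filter.hyperfilter ℕ).map (f S) := by
        rw [Ultrafilter.mem_map]
        exact Filter.Eventually.of_forall (fun n => hf S n hS)
      obtain ⟨c, hc, he⟩ := Ultrafilter.eq_pure_of_finite_mem (Set.finite_Iio ℓ) hmem
      refine ⟨c, fun _ => ⟨hc, ?_⟩⟩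
      have : ({c} : Set ℕ) ∈ (Filter.hyperfilter ℕ).map (f S) := by
        rw [he]; exact Ultrafilter.mem_pure.2 rfl
      rw [Ultrafilter.mem_map] at this
      exact this
    · exact ⟨0, fun h => absurd h hS⟩
  choose d hd using hd
  obtain ⟨x, hx, hxd⟩ : ∃ x : ℕ → ℕ, StrictMono x ∧ ∀ S : Finset ℕ, S.Nonempty →
      ∀ᶠ k in Filter.atTop, f S (x k) = d S := by
    let A : Finset ℕ → Set ℕ := fun S => {n | S.Nonempty → f S n = d S}
    let F : Filter ℕ := (⨅ S, Filter.principal (A S)) ⊓ Filter.atTop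
    have hle : (Filter.hyperfilter ℕ : Filter ℕ) ≤ F := by
      refine le_inf (le_iInf fun S => ?_) ?_
      · rw [Filter.le_principal_iff]
        by_cases hS : S.Nonempty
        · filter_upwards [(hd S hS).2] with n hn _ using hn
        · exact Filter.Eventually.of_forall (fun n h => absurd h hS)
      · rw [← Nat.cofinite_eq_atTop]; exact Filter.hyperfilter_le_cofinite
    haveI : F.NeBot := Filter.NeBot.mono inferInstance hle
    haveI : F.IsCountablyGenerated := by
      dsimp only [F]; infer_instance
    obtain ⟨y, hy⟩ := Filter.exists_seq_tendsto F
    obtain ⟨φ, hφ, hφ2⟩ := Filter.strictMono_subseq_of_tendsto_atTop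
      (hy.mono_right inf_le_right)
    refine ⟨y ∘ φ, hφ2, fun S hS => ?_⟩
    have h1 := (hy.comp hφ.tendsto_atTop).mono_right
      (inf_le_left.trans (iInf_le _ S))
    rw [Filter.tendsto_principal] at h1
    filter_upwards [h1] with k hk using hk hS
  obtain ⟨I, i, ⟨-, hIne, hIcl, D, hDI, hDinf, hDdis⟩, hi, hIi⟩ := fut (fun S => d (S.image x))
    (fun S hS => (hd _ (hS.image x)).1)
  have hfar : ∀ N : ℕ, ∃ S ∈ D, ∀ s ∈ S, N ≤ s := by
    intro N
    by_contra! hcon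
    choose! g hg hgN using hcon
    obtain ⟨S, hS, T, hT, hne, he⟩ := hDinf.exists_ne_map_eq_of_mapsTo
      (t := Set.Iio N) (f := g) (fun S hS => hgN S hS) (Set.finite_Iio N)
    have := hDdis hS hT hne
    exact Finset.disjoint_left.1 this (hg S hS) (he ▸ hg T hT)
  obtain ⟨B, hBD, hBr⟩ := exists_seq_of_forall_finset_exists (α := Finset ℕ) (fun S => S ∈ D)
    (fun P Q => FinLT P Q ∧ ∀ U ∈ I, U ⊆ Finset.range (P.sup id + 1) →
      ∀ n ∈ Q, f (U.image x) (x n) = i) (by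
    intro s _
    have h1 : ∀ P ∈ s, ∀ᶠ N in Filter.atTop, (∀ p ∈ P, p < N) ∧
        ∀ U ∈ (Finset.range (P.sup id + 1)).powerset, U ∈ I → f (U.image x) (x N) = i := by
      intro P _
      refine Filter.Eventually.and ?_ ?_
      · exact (Finset.eventually_all P).2 fun p _ => Filter.eventually_gt_atTop p
      · refine (Finset.eventually_all _).2 fun U _ => ?_
        by_cases hU : U ∈ I
        · filter_upwards [hxd (U.image x) ((hIne U hU).image x)] with N hN _
          rw [hN]; exact hIi U hU
        · exact Filter.Eventually.of_forall fun _ h => absurd h hU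
    obtain ⟨N, hN⟩ := Filter.eventually_atTop.1 ((Finset.eventually_all s).2 h1)
    obtain ⟨Q, hQ, hQN⟩ := hfar N
    refine ⟨Q, hQ, fun P hP => ⟨fun p hp q hq => (hN q (hQN q hq) P hP).1 p hp, ?_⟩⟩
    intro U hU hUs n hn
    exact (hN n (hQN n hn) P hP).2 U (Finset.mem_powerset.2 hUs) hU)
  have hBne : ∀ n, (B n).Nonempty := fun n => hIne _ (hDI (hBD n))
  let g : Finset ℕ → Finset ℕ := fun F => (F.biUnion B).image x
  have hBinj : Function.Injective (fun n => g {n}) := by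
    intro m n hmn
    simp only [g, Finset.singleton_biUnion] at hmn
    have he := Finset.image_injective hx.injective hmn
    obtain ⟨b, hb⟩ := hBne m
    rcases lt_trichotomy m n with h | h | h
    · exact absurd ((hBr m n h).1 b hb b (he ▸ hb)) (lt_irrefl _)
    · exact h
    · exact absurd ((hBr n m h).1 b (he ▸ hb) b hb) (lt_irrefl _)
  have hsub : Set.range (fun n => g {n}) ⊆ {S | ∃ F : Finset ℕ, F.Nonempty ∧ g F = S} := by
    rintro _ ⟨n, rfl⟩
    exact ⟨{n}, Finset.singleton_nonempty n, rfl⟩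
  have hinf := Set.infinite_range_of_injective hBinj
  refine ⟨{S | ∃ F : Finset ℕ, F.Nonempty ∧ g F = S}, i,
    ⟨hinf.mono hsub, ?_, ?_, _, hsub, hinf, ?_⟩, hi, ?_⟩
  · rintro _ ⟨F, hF, rfl⟩
    obtain ⟨k, hk⟩ := hF
    obtain ⟨b, hb⟩ := hBne k
    exact ⟨x b, Finset.mem_image_of_mem x (Finset.mem_biUnion.2 ⟨k, hk, hb⟩)⟩
  · intro 𝓕 hne
    induction hne using Finset.Nonempty.cons_induction with
    | singleton a => intro h; simpa using h
    | cons a s ha hs ih =>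
      intro h
      rw [Finset.coe_cons, Set.insert_subset_iff] at h
      obtain ⟨F, hF, hFe⟩ := h.1
      obtain ⟨G, hG, hGe⟩ := ih h.2
      refine ⟨F ∪ G, hF.mono Finset.subset_union_left, ?_⟩
      rw [Finset.sup_cons, ← hGe, id, ← hFe]
      simp only [g, Finset.union_biUnion, Finset.image_union, Finset.sup_eq_union]
  · rintro _ ⟨m, rfl⟩ _ ⟨n, rfl⟩ hne
    simp only [g, Finset.singleton_biUnion]
    rw [Finset.disjoint_image hx.injective, Finset.disjoint_left]
    intro b hb hb'
    rcases lt_trichotomy m n with h | h | h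
    · exact absurd ((hBr m n h).1 b hb b hb') (lt_irrefl _)
    · exact hne (by rw [h])
    · exact absurd ((hBr n m h).1 b hb' b hb) (lt_irrefl _)
  · rintro _ ⟨F, hF, rfl⟩ _ ⟨G, hG, rfl⟩ hlt
    have hTne : (g G).Nonempty := by
      obtain ⟨k, hk⟩ := hG
      obtain ⟨b, hb⟩ := hBne k
      exact ⟨x b, Finset.mem_image_of_mem x (Finset.mem_biUnion.2 ⟨k, hk, hb⟩)⟩
    have hm : sInf (↑(g G) : Set ℕ) ∈ g G := Nat.sInf_mem (s := (↑(g G) : Set ℕ)) hTne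
    obtain ⟨t, ht, hte⟩ := Finset.mem_image.1 hm
    obtain ⟨k, hk, htk⟩ := Finset.mem_biUnion.1 ht
    rw [← hte]
    have hMF := F.max'_mem hF
    set M := F.max' hF with hM
    have hMk : M < k := by
      obtain ⟨b, hb⟩ := hBne M
      have h1 : x b < x t := hlt _ (Finset.mem_image_of_mem x (Finset.mem_biUnion.2 ⟨M, hMF, hb⟩))
        _ (Finset.mem_image_of_mem x ht)
      by_contra hcon
      rcases (not_lt.1 hcon).lt_or_eq with h | h
      · have := (hBr k M h).1 t htk b hb
        exact absurd (hx.lt_iff_lt.1 h1) (by omega)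
      · have h2 : x t < x t := hlt _ (Finset.mem_image_of_mem x
          (Finset.mem_biUnion.2 ⟨k, h ▸ hMF, htk⟩)) _ (Finset.mem_image_of_mem x ht)
        exact lt_irrefl _ h2
    refine (hBr M k hMk).2 (F.biUnion B) ?_ ?_ t htk
    · have := hIcl (F.image B) (hF.image B) (by
        intro S hS
        obtain ⟨n, _, rfl⟩ := Finset.mem_image.1 (Finset.mem_coe.1 hS)
        exact hDI (hBD n))
      rw [Finset.sup_image, Function.id_comp, Finset.sup_eq_biUnion] at this
      exact this
    · intro b hb
      obtain ⟨n, hn, hbn⟩ := Finset.mem_biUnion.1 hb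
      rw [Finset.mem_range, Nat.lt_succ_iff]
      rcases (F.le_max' n hn).lt_or_eq with h | h
      · obtain ⟨c, hc⟩ := hBne M
        have h1 := (hBr n M h).1 b hbn c hc
        have h2 : c ≤ (B M).sup id := Finset.le_sup (f := id) hc
        omega
      · rw [← hM] at h
        exact Finset.le_sup (f := id) (h ▸ hbn)
end

section
/- Fix ℓ ≥ 1. Suppose the statement WFUT²_ℓ holds, i.e., for every coloring g : 𝒫_fin(ℕ) × ℕ → {0,…,ℓ−1} there exist an IP collection 𝓘 and a color i < ℓ such that g(S, min T) = i for every S, T ∈ 𝓘 with S < T. Then for every coloring f : 2^{<ω} → {0,…,ℓ−1} of the finite binary strings there exist an infinite ordered variable word over {0,1}, encoded by b : ℕ → {0,1} and nonempty finite sets F_1 < F_2 < ⋯, and a color j < ℓ such that f(W(a)) = j for every k ≥ 0 and every a ∈ {0,1}^k. -/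
/-- `WFUT²_ℓ` implies `OVW(2,ℓ)`. -/
theorem wfut_two_implies_ovw_two (ℓ : ℕ) (hℓ : 1 ≤ ℓ)
    (wfut : ∀ g : Finset ℕ → ℕ → ℕ, (∀ (S : Finset ℕ) (n : ℕ), S.Nonempty → g S n < ℓ) →
      ∃ (I : Set (Finset ℕ)) (i : ℕ), IsIPCollection I ∧ i < ℓ ∧
        ∀ S ∈ I, ∀ T ∈ I, FinLT S T → g S (sInf (↑T : Set ℕ)) = i) :
    ∀ f : List Bool → ℕ, (∀ σ, f σ < ℓ) →
      ∃ (b : ℕ → Bool) (F : ℕ → Finset ℕ),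
        (∀ k, (F k).Nonempty) ∧ (∀ k, FinLT (F k) (F (k + 1))) ∧
        ∃ j < ℓ, ∀ a : List Bool, f (instWord b F a) = j := by
  intro f hf
  obtain ⟨I, j, ⟨-, hne, hun, D, hDI, hDinf, hDd⟩, hj, hmono⟩ :=
    wfut (fun S n => f ((List.range n).map fun m => decide (m ∈ S))) (fun S n _ => hf _)
  have next : ∀ n : ℕ, ∃ S ∈ D, ∀ x ∈ S, n < x := by
    intro n
    have hinj : Set.InjOn (fun S : Finset ℕ => sInf (↑S : Set ℕ)) D := by
      intro S hS T hT hST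
      by_contra hne'
      have h1 : sInf (↑S : Set ℕ) ∈ (↑S : Set ℕ) := Nat.sInf_mem (hne S (hDI hS))
      have h2 : sInf (↑T : Set ℕ) ∈ (↑T : Set ℕ) := Nat.sInf_mem (hne T (hDI hT))
      have hd := hDd hS hT hne'
      simp only at hST
      rw [← hST] at h2
      exact Finset.disjoint_left.mp hd h1 h2
    obtain ⟨m, ⟨S, hS, rfl⟩, hm⟩ := (hDinf.image hinj).exists_gt n
    exact ⟨S, hS, fun x hx => lt_of_lt_of_le hm (Nat.sInf_le hx)⟩
  choose N hN1 hN2 using next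
  let E : ℕ → Finset ℕ := fun k => Nat.rec (N 0) (fun _ S => N (S.sup id)) k
  have hEI : ∀ k, E k ∈ I := by
    intro k
    apply hDI
    cases k with
    | zero => exact hN1 0
    | succ k => exact hN1 _
  have hEs : ∀ k, FinLT (E k) (E (k + 1)) := by
    intro k x hx y hy
    have h1 : x ≤ (E k).sup id := Finset.le_sup (f := id) hx
    exact lt_of_le_of_lt h1 (hN2 _ y hy)
  have hElt : ∀ i k, FinLT (E i) (E (i + k + 1)) := by
    intro i k
    induction k with
    | zero => exact hEs i
    | succ k ih =>
      intro x hx y hy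
      obtain ⟨z, hz⟩ := hne _ (hEI (i + k + 1))
      exact (ih x hx z hz).trans (hEs (i + k + 1) z hz y hy)
  have hElt' : ∀ i k, i < k → FinLT (E i) (E k) := by
    intro i k h
    obtain ⟨d, rfl⟩ := Nat.exists_eq_add_of_lt h
    exact hElt i d
  have huniq : ∀ i k n, n ∈ E i → n ∈ E k → i = k := by
    intro i k n hi hk
    rcases lt_trichotomy i k with h | h | h
    · exact absurd (hElt' i k h n hi n hk) (lt_irrefl _)
    · exact h
    · exact absurd (hElt' k i h n hk n hi) (lt_irrefl _)
  clear_value E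
  refine ⟨fun n : ℕ => decide (n ∈ E 0), fun k => E (k + 1), fun k => hne _ (hEI (k + 1)),
    fun k => hEs (k + 1), j, hj, ?_⟩
  intro a
  let 𝓕 : Finset (Finset ℕ) := insert (E 0)
    (((Finset.range a.length).filter fun i => a.getD i false = true).image fun i => E (i + 1))
  have hmem : ∀ n, n ∈ 𝓕.sup id ↔
      n ∈ E 0 ∨ ∃ i, i < a.length ∧ a.getD i false = true ∧ n ∈ E (i + 1) := by
    intro n
    simp only [𝓕, Finset.mem_sup, Finset.mem_insert, Finset.mem_image, Finset.mem_filter,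
      Finset.mem_range, id]
    constructor
    · rintro ⟨S, rfl | ⟨i, ⟨h1, h2⟩, rfl⟩, hS⟩
      · exact Or.inl hS
      · exact Or.inr ⟨i, h1, h2, hS⟩
    · rintro (h | ⟨i, h1, h2, h3⟩)
      · exact ⟨_, Or.inl rfl, h⟩
      · exact ⟨_, Or.inr ⟨i, ⟨h1, h2⟩, rfl⟩, h3⟩
  have hS : 𝓕.sup id ∈ I := by
    apply hun _ (Finset.insert_nonempty _ _)
    intro S hS
    simp only [𝓕, Finset.mem_coe, Finset.mem_insert, Finset.mem_image] at hS
    rcases hS with rfl | ⟨i, -, rfl⟩ <;> exact hEI _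
  have hlt : FinLT (𝓕.sup id) (E (a.length + 1)) := by
    intro x hx y hy
    rcases (hmem x).1 hx with h | ⟨i, h1, -, h3⟩
    · exact hElt' 0 _ (by omega) x h y hy
    · exact hElt' (i + 1) _ (by omega) x h3 y hy
  rw [← hmono _ hS _ (hEI _) hlt]
  simp only [instWord]
  congr 1
  apply List.map_congr_left
  intro n _
  split_ifs with h
  · obtain ⟨h1, h2⟩ := Nat.find_spec h
    generalize Nat.find h = i at h1 h2
    rw [Bool.eq_iff_iff, decide_eq_true_iff, hmem]
    constructor
    · intro h3
      exact Or.inr ⟨i, h1, h3, h2⟩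
    · rintro (h3 | ⟨k, _, h4, h5⟩)
      · exact absurd (huniq _ _ _ h3 h2) (by omega)
      · have := huniq _ _ _ h5 h2
        obtain rfl : k = i := by omega
        exact h4
  · rw [Bool.eq_iff_iff, decide_eq_true_iff, decide_eq_true_iff, hmem]
    constructor
    · exact Or.inl
    · rintro (h3 | ⟨k, h3, _, h5⟩)
      · exact h3
      · exact absurd ⟨k, h3, h5⟩ h
end

section
/- For every ℓ ≥ 1 and every coloring f : 𝒫_fin(ℕ) × ℕ → {0,…,ℓ−1}, there exist an IP collection 𝓘 and a color i < ℓ such that f(S, min T) = i for every S, T ∈ 𝓘 with S < T. (The statement WFUT²_ℓ.) -/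
theorem wfut_ultra : ∃ p : Ultrafilter (Finset ℕ),
    (∀ P : Finset ℕ → Prop, (∀ᶠ S in (p : Filter (Finset ℕ)), P S) →
      ∀ᶠ S in (p : Filter (Finset ℕ)), ∀ᶠ (T : Finset ℕ) in (p : Filter (Finset ℕ)), P (S ∪ T)) ∧
    ∀ n : ℕ, ∀ᶠ S in (p : Filter (Finset ℕ)), S.Nonempty ∧ ∀ x ∈ S, n < x := by
  letI : Semigroup (Finset ℕ) :=
    { mul := fun A B => A ∪ B, mul_assoc := fun A B C => Finset.union_assoc A B C }
  letI := @Ultrafilter.semigroup (Finset ℕ) _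
  let S : Set (Ultrafilter (Finset ℕ)) :=
    ⋂ n : ℕ, {U | {S : Finset ℕ | S.Nonempty ∧ ∀ x ∈ S, n < x} ∈ U}
  have h := exists_idempotent_in_compact_subsemigroup (M := Ultrafilter (Finset ℕ)) ?_ S ?_ ?_ ?_
  · rcases h with ⟨U, hU, hi⟩
    refine ⟨U, ?_, fun n => Set.mem_iInter.mp hU n⟩
    intro P hP
    rw [← hi] at hP
    exact hP
  · exact Ultrafilter.continuous_mul_left
  · apply IsCompact.nonempty_iInter_of_sequence_nonempty_isCompact_isClosed
    · intro n U hU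
      refine Filter.mem_of_superset hU ?_
      rintro T ⟨h1, h2⟩
      exact ⟨h1, fun x hx => by have := h2 x hx; omega⟩
    · intro n
      refine ⟨pure {n + 1}, ?_⟩
      exact Filter.mem_pure.mpr (by simp)
    · exact (ultrafilter_isClosed_basic _).isCompact
    · intro n
      exact ultrafilter_isClosed_basic _
  · exact IsClosed.isCompact (isClosed_iInter fun i => ultrafilter_isClosed_basic _)
  · intro U hU V hV
    rw [Set.mem_iInter] at *
    intro n
    have h1 : ∀ᶠ A in (U : Filter (Finset ℕ)), ∀ᶠ B in (V : Filter (Finset ℕ)),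
        (A ∪ B).Nonempty ∧ ∀ x ∈ A ∪ B, n < x := by
      have hUn : ∀ᶠ A in (U : Filter (Finset ℕ)), A.Nonempty ∧ ∀ x ∈ A, n < x := hU n
      have hVn : ∀ᶠ A in (V : Filter (Finset ℕ)), A.Nonempty ∧ ∀ x ∈ A, n < x := hV n
      filter_upwards [hUn] with A hA
      filter_upwards [hVn] with B hB
      refine ⟨hA.1.mono Finset.subset_union_left, fun x hx => ?_⟩
      rcases Finset.mem_union.mp hx with h | h
      · exact hA.2 x h
      · exact hB.2 x h
    exact h1

theorem wfut_seq (ℓ : ℕ) (f : Finset ℕ → ℕ → ℕ)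
    (hf : ∀ (S : Finset ℕ) (n : ℕ), S.Nonempty → f S n < ℓ) :
    ∃ i < ℓ, ∃ (B : ℕ → Finset ℕ) (F : ℕ → Finset (Finset ℕ)),
      (∀ n, (B n).Nonempty ∧ B n ∈ F n) ∧
      ∀ m n, m < n → ∀ S ∈ F m, S ∪ B n ∈ F n ∧ FinLT S (B n) ∧
        f S (sInf (↑(B n) : Set ℕ)) = i := by
  classical
  obtain ⟨p, hp, hn⟩ := wfut_ultra
  have hne : ∀ᶠ S in (p : Filter (Finset ℕ)), S.Nonempty := (hn 0).mono fun _ h => h.1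
  have h1 : ∀ S : Finset ℕ, S.Nonempty → ∃ i ∈ Set.Iio ℓ,
      ∀ᶠ (T : Finset ℕ) in (p : Filter (Finset ℕ)), f S (sInf (↑T : Set ℕ)) = i := by
    intro S hS
    rw [← Ultrafilter.eventually_exists_mem_iff (Set.finite_Iio ℓ)]
    exact Filter.Eventually.of_forall fun T => ⟨_, hf S _ hS, rfl⟩
  have h2 : ∃ i ∈ Set.Iio ℓ, ∀ᶠ S in (p : Filter (Finset ℕ)),
      ∀ᶠ (T : Finset ℕ) in (p : Filter (Finset ℕ)), f S (sInf (↑T : Set ℕ)) = i := by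
    rw [← Ultrafilter.eventually_exists_mem_iff (Set.finite_Iio ℓ)]
    exact hne.mono h1
  obtain ⟨i, hi, hA⟩ := h2
  refine ⟨i, hi, ?_⟩
  let A : Finset ℕ → Prop := fun S =>
    ∀ᶠ (T : Finset ℕ) in (p : Filter (Finset ℕ)), f S (sInf (↑T : Set ℕ)) = i
  let A' : Finset ℕ → Prop := fun S => A S ∧ ∀ᶠ (T : Finset ℕ) in (p : Filter (Finset ℕ)), A (S ∪ T)
  have hA' : ∀ᶠ S in (p : Filter (Finset ℕ)), A' S := hA.and (hp A hA)
  have hst : ∀ S, A' S → ∀ᶠ (T : Finset ℕ) in (p : Filter (Finset ℕ)), A' (S ∪ T) := by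
    intro S hS
    have := hp (fun T => A (S ∪ T)) hS.2
    filter_upwards [hS.2, this] with T h3 h4
    refine ⟨h3, ?_⟩
    filter_upwards [h4] with R hR
    rwa [Finset.union_assoc]
  obtain ⟨g, hg1, hg2⟩ := exists_seq_of_forall_finset_exists
    (α := Finset ℕ × Finset (Finset ℕ))
    (fun y => y.1.Nonempty ∧ y.1 ∈ y.2 ∧ ∀ S ∈ y.2, A' S)
    (fun x y => ∀ S ∈ x.2, S ∪ y.1 ∈ y.2 ∧ FinLT S y.1 ∧ f S (sInf (↑y.1 : Set ℕ)) = i)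
    (by
      intro s hs
      let F := s.biUnion Prod.snd
      have hF : ∀ S ∈ F, A' S := by
        intro S hS
        obtain ⟨x, hx, hSx⟩ := Finset.mem_biUnion.mp hS
        exact (hs x hx).2.2 S hSx
      have h5 : ∀ᶠ (T : Finset ℕ) in (p : Filter (Finset ℕ)), ∀ S ∈ F,
          A' (S ∪ T) ∧ FinLT S T ∧ f S (sInf (↑T : Set ℕ)) = i := by
        rw [Filter.eventually_all_finset]
        intro S hS
        filter_upwards [hst S (hF S hS), (hF S hS).1, hn (S.sup id)] with T h6 h7 h8
        refine ⟨h6, ?_, h7⟩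
        intro x hx y hy
        have : x ≤ S.sup id := Finset.le_sup (f := id) hx
        exact lt_of_le_of_lt this (h8.2 y hy)
      obtain ⟨T, ⟨hT1, hT2⟩, hT3⟩ := ((hne.and hA').and h5).exists
      refine ⟨(T, insert T (F.image fun S => S ∪ T)), ⟨hT1, by simp, ?_⟩, ?_⟩
      · intro S hS
        rcases Finset.mem_insert.mp hS with rfl | hS
        · exact hT2
        · obtain ⟨R, hR, rfl⟩ := Finset.mem_image.mp hS
          exact (hT3 R hR).1
      · intro x hx S hS
        have hSF : S ∈ F := Finset.mem_biUnion.mpr ⟨x, hx, hS⟩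
        exact ⟨Finset.mem_insert_of_mem (Finset.mem_image_of_mem _ hSF), (hT3 S hSF).2⟩)
  exact ⟨fun n => (g n).1, fun n => (g n).2, fun n => ⟨(hg1 n).1, (hg1 n).2.1⟩, hg2⟩

/-- The statement `WFUT²_ℓ`. -/
theorem wfut_two (ℓ : ℕ) (hℓ : 1 ≤ ℓ) (f : Finset ℕ → ℕ → ℕ)
    (hf : ∀ (S : Finset ℕ) (n : ℕ), S.Nonempty → f S n < ℓ) :
    ∃ (I : Set (Finset ℕ)) (i : ℕ), IsIPCollection I ∧ i < ℓ ∧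
      ∀ S ∈ I, ∀ T ∈ I, FinLT S T → f S (sInf (↑T : Set ℕ)) = i := by
  classical
  obtain ⟨i, hi, B, F, hB, hF⟩ := wfut_seq ℓ f hf
  have hlt : ∀ m n, m < n → FinLT (B m) (B n) := fun m n h => (hF m n h _ (hB m).2).2.1
  have key : ∀ K : Finset ℕ, K.Nonempty →
      ∃ m ∈ K, K.sup B ∈ F m := by
    intro K
    induction K using Finset.induction_on_max with
    | empty => simp
    | insert a s has ih =>
      intro _
      refine ⟨a, Finset.mem_insert_self _ _, ?_⟩
      rcases s.eq_empty_or_nonempty with rfl | hs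
      · simpa using (hB a).2
      · obtain ⟨m, hm, hmF⟩ := ih hs
        have := (hF m a (has m hm) _ hmF).1
        rw [Finset.sup_insert, sup_comm]
        exact this
  have hdisj : ∀ m n, m ≠ n → Disjoint (B m) (B n) := by
    intro m n hmn
    rw [Finset.disjoint_left]
    intro x hx hy
    rcases lt_or_gt_of_ne hmn with h | h
    · exact lt_irrefl _ (hlt m n h x hx x hy)
    · exact lt_irrefl _ (hlt n m h x hy x hx)
  have hinj : Function.Injective B := by
    intro m n h
    by_contra hne
    have h1 := hdisj m n hne
    rw [h, Finset.disjoint_self_iff_empty] at h1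
    exact (hB n).1.ne_empty h1
  have hsub : Set.range B ⊆ {S | ∃ K : Finset ℕ, K.Nonempty ∧ K.sup B = S} := by
    rintro _ ⟨n, rfl⟩
    exact ⟨{n}, by simp, by simp⟩
  refine ⟨{S | ∃ K : Finset ℕ, K.Nonempty ∧ K.sup B = S}, i,
    ⟨(Set.infinite_range_of_injective hinj).mono hsub, ?_, ?_, Set.range B, hsub,
      Set.infinite_range_of_injective hinj, ?_⟩, hi, ?_⟩
  · rintro _ ⟨K, ⟨k, hk⟩, rfl⟩
    exact (hB k).1.mono (Finset.le_sup (f := B) hk)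
  · intro 𝓕
    induction 𝓕 using Finset.induction_on with
    | empty => simp
    | insert a s _ ih =>
      intro _ hs
      rw [Finset.coe_insert, Set.insert_subset_iff] at hs
      obtain ⟨⟨K, hK, hKa⟩, hs2⟩ := hs
      rcases s.eq_empty_or_nonempty with rfl | hne
      · exact ⟨K, hK, by simpa using hKa⟩
      · obtain ⟨L, hL, hLs⟩ := ih hne hs2
        exact ⟨K ∪ L, hK.mono Finset.subset_union_left, by
          rw [Finset.sup_union, Finset.sup_insert, hKa, hLs]; rfl⟩
  · rintro _ ⟨m, rfl⟩ _ ⟨n, rfl⟩ h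
    exact hdisj m n fun e => h (e ▸ rfl)
  · rintro _ ⟨J, hJ, rfl⟩ _ ⟨K, hK, rfl⟩ hST
    obtain ⟨m, hm, hmF⟩ := key J hJ
    have hk := K.min'_mem hK
    set k := K.min' hK with hkdef
    have hBm : B m ⊆ J.sup B := Finset.le_sup (f := B) hm
    have hBk : B k ⊆ K.sup B := Finset.le_sup (f := B) hk
    have hmk : m < k := by
      by_contra hcon
      obtain ⟨x, hx⟩ := (hB m).1
      obtain ⟨y, hy⟩ := (hB k).1
      have h1 := hST x (hBm hx) y (hBk hy)
      rcases Nat.lt_or_ge k m with h | h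
      · have := hlt k m h y hy x hx
        omega
      · have e : m = k := by omega
        rw [← e] at hBk
        exact lt_irrefl _ (hST x (hBm hx) x (hBk hx))
    have hmin : sInf (↑(K.sup B) : Set ℕ) = sInf (↑(B k) : Set ℕ) := by
      have h1 : sInf (↑(B k) : Set ℕ) ∈ (↑(B k) : Set ℕ) := Nat.sInf_mem (hB k).1
      apply le_antisymm
      · exact Nat.sInf_le (hBk h1)
      · refine le_csInf ⟨_, hBk h1⟩ ?_
        intro x hx
        obtain ⟨j, hj, hxj⟩ := Finset.mem_sup.mp hx
        rcases (K.min'_le j hj).eq_or_lt with e | h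
        · rw [← hkdef] at e
          rw [← e] at hxj
          exact Nat.sInf_le hxj
        · exact (hlt k j h _ h1 x hxj).le
    rw [hmin]
    exact (hF m k hmk _ hmF).2.2
end

section
/- For every ℓ ≥ 1 and every coloring d : 𝒫_fin(ℕ) → {0,…,ℓ−1}, there exist an IP collection 𝓘 and a color i < ℓ such that d(S) = i for all S ∈ 𝓘. (The Finite Union Theorem FUT_ℓ.) -/
/-- Finite sets with partial disjoint union, `bad` as absorbing element. -/
inductive FUW : Type where
  | bad : FUW
  | mk : Finset ℕ → FUW

namespace FUW

open Classical in
noncomputable def mul : FUW → FUW → FUW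
  | mk S, mk T => if Disjoint S T then mk (S ∪ T) else bad
  | mk _, bad => bad
  | bad, _ => bad

theorem bad_mul' (x : FUW) : mul bad x = bad := by cases x <;> rfl
theorem mul_bad' (x : FUW) : mul x bad = bad := by cases x <;> rfl
theorem mul_pos' {S T : Finset ℕ} (h : Disjoint S T) : mul (mk S) (mk T) = mk (S ∪ T) :=
  if_pos h
theorem mul_neg' {S T : Finset ℕ} (h : ¬ Disjoint S T) : mul (mk S) (mk T) = bad :=
  if_neg h

theorem assoc' (x y z : FUW) : mul (mul x y) z = mul x (mul y z) := by
  rcases x with _ | x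
  · simp only [bad_mul']
  rcases y with _ | y
  · simp only [bad_mul', mul_bad']
  rcases z with _ | z
  · simp only [mul_bad']
  by_cases h : Disjoint x y
  · rw [mul_pos' h]
    by_cases h' : Disjoint y z
    · rw [mul_pos' h']
      by_cases h'' : Disjoint x z
      · rw [mul_pos' (Finset.disjoint_union_left.2 ⟨h'', h'⟩),
          mul_pos' (Finset.disjoint_union_right.2 ⟨h, h''⟩), Finset.union_assoc]
      · rw [mul_neg' (fun k => h'' (Finset.disjoint_union_left.1 k).1),
          mul_neg' (fun k => h'' (Finset.disjoint_union_right.1 k).2)]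
    · rw [mul_neg' h', mul_bad', mul_neg' (fun k => h' (Finset.disjoint_union_left.1 k).2)]
  · rw [mul_neg' h, bad_mul']
    by_cases h' : Disjoint y z
    · rw [mul_pos' h', mul_neg' (fun k => h (Finset.disjoint_union_right.1 k).1)]
    · rw [mul_neg' h', mul_bad']

theorem comm' (x y : FUW) : mul x y = mul y x := by
  rcases x with _ | x
  · simp only [bad_mul', mul_bad']
  rcases y with _ | y
  · simp only [bad_mul', mul_bad']
  by_cases h : Disjoint x y
  · rw [mul_pos' h, mul_pos' h.symm, Finset.union_comm]
  · rw [mul_neg' h, mul_neg' (fun k => h k.symm)]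

theorem one_mul' (x : FUW) : mul (mk ∅) x = x := by
  rcases x with _ | x
  · rfl
  · rw [mul_pos' (Finset.disjoint_empty_left x), Finset.empty_union]

noncomputable instance : CommMonoid FUW where
  mul := mul
  one := mk ∅
  mul_assoc := assoc'
  one_mul := one_mul'
  mul_one := fun x => (comm' x (mk ∅)).trans (one_mul' x)
  mul_comm := comm'

theorem mk_inj {S T : Finset ℕ} (h : mk S = mk T) : S = T := FUW.mk.inj h

theorem mk_mul {S T : Finset ℕ} (h : Disjoint S T) : mk S * mk T = mk (S ∪ T) := mul_pos' h

theorem mul_eq {x y : FUW} {S : Finset ℕ} (h : x * y = mk S) :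
    ∃ X Y, x = mk X ∧ y = mk Y ∧ Disjoint X Y ∧ S = X ∪ Y := by
  change mul x y = mk S at h
  rcases x with _ | X
  · rw [bad_mul'] at h
    cases h
  rcases y with _ | Y
  · rw [mul_bad'] at h
    cases h
  refine ⟨X, Y, rfl, rfl, ?_⟩
  by_cases hd : Disjoint X Y
  · rw [mul_pos' hd] at h
    exact ⟨hd, (mk_inj h).symm⟩
  · rw [mul_neg' hd] at h
    cases h

theorem prod_eq (B : ℕ → Finset ℕ) (s : Finset ℕ) :
    ∀ S, ∏ i ∈ s, mk (B i) = mk S → S = s.sup B := by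
  induction s using Finset.induction_on with
  | empty =>
    intro S h
    exact (mk_inj h).symm
  | insert a s ha ih =>
    intro S h
    rw [Finset.prod_insert ha] at h
    obtain ⟨X, Y, hX, hY, -, rfl⟩ := mul_eq h
    rw [Finset.sup_insert, mk_inj hX, ih Y hY]
    rfl

def base : Stream' FUW := fun n => mk {n}

theorem FP_base (a : Stream' FUW) (m : FUW) (h : m ∈ Hindman.FP a) :
    ∀ n, a = base.drop n → ∃ S : Finset ℕ, m = mk S ∧ S.Nonempty ∧ ∀ k ∈ S, n ≤ k := by
  have hd : ∀ n, (base.drop n).head = mk {n} := by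
    intro n
    rw [Stream'.head_drop]; rfl
  have ht : ∀ n, (base.drop n).tail = base.drop (n + 1) := by
    intro n
    rw [Stream'.tail_eq_drop, Stream'.drop_drop]
  induction h with
  | head' a =>
    rintro n rfl
    exact ⟨{n}, hd n, by simp, by simp⟩
  | tail' a m _ ih =>
    rintro n rfl
    obtain ⟨S, h1, h2, h3⟩ := ih (n + 1) (ht n)
    exact ⟨S, h1, h2, fun k hk => (Nat.le_succ n).trans (h3 k hk)⟩
  | cons' a m _ ih =>
    rintro n rfl
    obtain ⟨S, rfl, h2, h3⟩ := ih (n + 1) (ht n)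
    refine ⟨{n} ∪ S, ?_, by simp, ?_⟩
    · rw [hd]
      apply mk_mul
      rw [Finset.disjoint_singleton_left]
      intro hn
      have := h3 n hn
      omega
    · intro k hk
      rcases Finset.mem_union.1 hk with hk | hk
      · simp at hk; omega
      · have := h3 k hk
        omega

end FUW

/-- The Finite Union Theorem `FUT_ℓ`. -/
theorem finite_union_theorem (ℓ : ℕ) (hℓ : 1 ≤ ℓ) (d : Finset ℕ → ℕ)
    (hd : ∀ S : Finset ℕ, S.Nonempty → d S < ℓ) :
    ∃ (I : Set (Finset ℕ)) (i : ℕ), IsIPCollection I ∧ i < ℓ ∧ ∀ S ∈ I, d S = i := by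
  let C : ℕ → Set FUW := fun i => {m | ∃ S : Finset ℕ, m = FUW.mk S ∧ S.Nonempty ∧ d S = i}
  obtain ⟨c, hc, b, hb⟩ := Hindman.FP_partition_regular FUW.base (C '' Set.Iio ℓ)
    ((Set.finite_Iio ℓ).image C) (by
      intro m hm
      obtain ⟨S, h1, h2, -⟩ := FUW.FP_base _ m hm 0 rfl
      exact ⟨C (d S), ⟨d S, hd S h2, rfl⟩, S, h1, h2, rfl⟩)
  obtain ⟨i, hi, rfl⟩ := hc
  have h0 : ∀ n, ∃ S : Finset ℕ, b.get n = FUW.mk S ∧ S.Nonempty ∧ d S = i :=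
    fun n => hb (Hindman.FP.singleton b n)
  choose B hB hne hdB using h0
  have hsup : ∀ s : Finset ℕ, s.Nonempty → (s.sup B).Nonempty ∧ d (s.sup B) = i := by
    intro s hs
    obtain ⟨S, h1, h2, h3⟩ := hb (Hindman.FP.finsetProd b s hs)
    simp only [hB] at h1
    rw [← FUW.prod_eq B s S h1]
    exact ⟨h2, h3⟩
  have hlt : ∀ m n, m < n → Disjoint (B m) (B n) := by
    intro m n hmn
    obtain ⟨S, h1, -, -⟩ := hb (Hindman.FP.mul_two b m n hmn)
    obtain ⟨X, Y, hX, hY, h, -⟩ := FUW.mul_eq h1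
    rw [hB] at hX hY
    rwa [FUW.mk_inj hX, FUW.mk_inj hY]
  have hdis : ∀ m n, m ≠ n → Disjoint (B m) (B n) := by
    intro m n hmn
    rcases lt_or_gt_of_ne hmn with h | h
    · exact hlt m n h
    · exact (hlt n m h).symm
  have hinj : Function.Injective B := by
    intro m n hmn
    by_contra h
    have := hdis m n h
    rw [hmn, disjoint_self] at this
    exact (hne n).ne_empty this
  have hsub : Set.range B ⊆ {S | ∃ s : Finset ℕ, s.Nonempty ∧ S = s.sup B} := by
    rintro _ ⟨n, rfl⟩
    exact ⟨{n}, by simp, by simp⟩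
  have hinf : (Set.range B).Infinite := Set.infinite_range_of_injective hinj
  refine ⟨{S | ∃ s : Finset ℕ, s.Nonempty ∧ S = s.sup B}, i,
    ⟨hinf.mono hsub, ?_, ?_, Set.range B, hsub, hinf, ?_⟩, hi, ?_⟩
  · rintro _ ⟨s, hs, rfl⟩
    exact (hsup s hs).1
  · intro F hF
    induction hF using Finset.Nonempty.cons_induction with
    | singleton a =>
      intro h
      simpa using h
    | cons a F ha hF ih =>
      intro h
      rw [Finset.coe_cons, Set.insert_subset_iff] at h
      obtain ⟨t, ht, h2⟩ := ih h.2
      obtain ⟨s, hs, h1⟩ := h.1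
      refine ⟨s ∪ t, hs.mono Finset.subset_union_left, ?_⟩
      rw [Finset.sup_cons, h2, Finset.sup_union, id, h1]
  · rintro _ ⟨m, rfl⟩ _ ⟨n, rfl⟩ hmn
    exact hdis m n (fun h => hmn (by rw [h]))
  · rintro _ ⟨s, hs, rfl⟩
    exact (hsup s hs).2
end

section
/- Let ℓ ≥ 1, let c̃ : 2^{<ω} → {0,…,ℓ−1} be a coloring of the finite binary strings, and let ρ be a binary string. Then there exist a nonempty set of colors L ⊆ {0,…,ℓ−1} and binary strings τ^η, one for each nonempty string η over the alphabet L of length at most |L|+1, such that, setting η̃ to be the constant string (max L, …, max L) of length |L|+1 and ρ̃ = τ^{η̃} followed by one bit 0, the following hold: (1) ρ is a proper prefix of τ^η for every η of length 1, and for all indices η, β, τ^η is a proper prefix of τ^β if and only if η strictly precedes β in the shortlex order (shorter strings first, strings of equal length compared lexicographically); (2) ρ̃(|τ^η|) = 0 for every index η; (3) for every 0 ≤ i ≤ |L| and every η over L of length i+1, letting η_0 ≺ η_1 ≺ ⋯ ≺ η_{i−1} be the nonempty proper prefixes of η and Q = {|τ^{η_0}|, …, |τ^{η_{i−1}}|}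 (with Q = ∅ when i = 0), one has c̃((τ^η)_Q) = η(i); (4) letting P = {|τ^η| : η a nonempty string over L of length at most |L|+1}, for every subset Q of P and every binary string τ having ρ̃ as a (not necessarily proper) prefix, c̃(τ_Q) ∈ L. -/
/-- `ValidIdx L η`: `η` is a nonempty string over the alphabet `L` of length at most
`|L| + 1`. -/
def ValidIdx (L : Finset ℕ) (η : List ℕ) : Prop :=
  η ≠ [] ∧ η.length ≤ L.card + 1 ∧ ∀ x ∈ η, x ∈ L

/-- Shortlex order on strings of naturals: shorter strings first, strings of equal length
compared lexicographically. -/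
def ShortLex (η β : List ℕ) : Prop :=
  η.length < β.length ∨ (η.length = β.length ∧ List.Lex (· < ·) η β)

/-- `ρ̃`: the string `τ^{η̃}` followed by one bit `0`, where `η̃` is the constant string
`(max L, …, max L)` of length `|L| + 1`. -/
noncomputable def rhoTilde (L : Finset ℕ) (τ : List ℕ → List Bool) : List Bool :=
  τ (List.replicate (L.card + 1) (sSup (↑L : Set ℕ))) ++ [false]

theorem flip_len (σ : List Bool) (F : Finset ℕ) : (flipStr σ F).length = σ.length := by
  simp [flipStr]

theorem flipS_flipS (σ : List Bool) (F : Finset ℕ) : flipStr (flipStr σ F) F = σ := by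
  apply List.ext_getElem
  · simp [flipStr]
  · intro i h1 h2
    simp only [flipStr, List.getElem_mapIdx]
    split <;> simp

theorem flip_prefix {σ τ : List Bool} (F : Finset ℕ) (h : σ <+: τ) :
    flipStr σ F <+: flipStr τ F := by
  obtain ⟨t, rfl⟩ := h
  simp only [flipStr, List.mapIdx_append]
  exact List.prefix_append _ _

theorem flip_id (σ : List Bool) (F : Finset ℕ) (h : ∀ q ∈ F, σ.length ≤ q) :
    flipStr σ F = σ := by
  apply List.ext_getElem
  · simp [flipStr]
  · intro i h1 h2
    simp only [flipStr, List.getElem_mapIdx]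
    rw [if_neg]
    intro hi
    exact absurd (h i hi) (by omega)

/-- Rank of a string. -/
def rk (B : ℕ) : List ℕ → ℕ
  | [] => 0
  | x :: xs => (x + 1) * B ^ xs.length + rk B xs

theorem rk_lt (B : ℕ) (η : List ℕ) (h : ∀ x ∈ η, x + 1 < B) : rk B η < B ^ η.length := by
  induction η with
  | nil => simp [rk]
  | cons x xs ih =>
    have h1 := ih (fun y hy => h y (List.mem_cons_of_mem _ hy))
    have h2 : x + 2 ≤ B := h x (by simp)
    have h3 : (x + 2) * B ^ xs.length ≤ B * B ^ xs.length := Nat.mul_le_mul_right _ h2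
    simp only [rk, List.length_cons, pow_succ']
    nlinarith

theorem rk_short (B : ℕ) (η β : List ℕ) (h : ∀ x ∈ η, x + 1 < B) (hB : 0 < B)
    (hl : η.length < β.length) : rk B η < rk B β := by
  cases β with
  | nil => simp at hl
  | cons y ys =>
    have h1 := rk_lt B η h
    have h2 : B ^ η.length ≤ B ^ ys.length :=
      Nat.pow_le_pow_right hB (by simp at hl; omega)
    simp only [rk]
    nlinarith [Nat.zero_le (rk B ys), Nat.zero_le (y * B ^ ys.length)]

theorem rk_lex (B : ℕ) (η β : List ℕ) (h : ∀ x ∈ η, x + 1 < B)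
    (hl : η.length = β.length) (hx : List.Lex (· < ·) η β) : rk B η < rk B β := by
  induction hx with
  | nil => simp at hl
  | @cons a l1 l2 hh ih =>
    have hl' : l1.length = l2.length := by simpa using hl
    have := ih (fun y hy => h y (List.mem_cons_of_mem _ hy)) hl'
    simp only [rk, hl']
    omega
  | @rel a l1 b l2 hab =>
    have hl' : l1.length = l2.length := by simpa using hl
    have h1 := rk_lt B l1 (fun y hy => h y (List.mem_cons_of_mem _ hy))
    have h3 : (a + 2) * B ^ l2.length ≤ (b + 1) * B ^ l2.length :=
      Nat.mul_le_mul_right _ (by omega)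
    simp only [rk]
    rw [hl'] at h1 ⊢
    nlinarith [Nat.zero_le (rk B l2)]

theorem rk_shortlex (B : ℕ) (η β : List ℕ) (h : ∀ x ∈ η, x + 1 < B) (hB : 0 < B)
    (hs : ShortLex η β) : rk B η < rk B β := by
  rcases hs with hs | ⟨h1, h2⟩
  · exact rk_short B η β h hB hs
  · exact rk_lex B η β h h1 h2

theorem lex_tri (η β : List ℕ) (hl : η.length = β.length) :
    List.Lex (· < ·) η β ∨ η = β ∨ List.Lex (· < ·) β η := by
  induction η generalizing β with
  | nil => cases β with
    | nil => simp
    | cons y ys => simp at hl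
  | cons x xs ih => cases β with
    | nil => simp at hl
    | cons y ys =>
      rcases lt_trichotomy x y with h | h | h
      · exact Or.inl (List.Lex.rel h)
      · subst h
        rcases ih ys (by simpa using hl) with h | h | h
        · exact Or.inl (List.Lex.cons h)
        · exact Or.inr (Or.inl (by rw [h]))
        · exact Or.inr (Or.inr (List.Lex.cons h))
      · exact Or.inr (Or.inr (List.Lex.rel h))

theorem shortlex_tri (η β : List ℕ) : ShortLex η β ∨ η = β ∨ ShortLex β η := by
  rcases lt_trichotomy η.length β.length with h | h | h
  · exact Or.inl (Or.inl h)
  · rcases lex_tri η β h with h' | h' | h'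
    · exact Or.inl (Or.inr ⟨h, h'⟩)
    · exact Or.inr (Or.inl h')
    · exact Or.inr (Or.inr (Or.inr ⟨h.symm, h'⟩))
  · exact Or.inr (Or.inr (Or.inl h))

theorem rk_iff (B : ℕ) (η β : List ℕ) (h : ∀ x ∈ η, x + 1 < B) (h' : ∀ x ∈ β, x + 1 < B)
    (hB : 0 < B) : rk B η < rk B β ↔ ShortLex η β := by
  refine ⟨fun hr => ?_, rk_shortlex B η β h hB⟩
  rcases shortlex_tri η β with h1 | h1 | h1
  · exact h1
  · subst h1; omega
  · have := rk_shortlex B β η h' hB h1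
    omega

theorem rk_inj (B : ℕ) (η β : List ℕ) (h : ∀ x ∈ η, x + 1 < B) (h' : ∀ x ∈ β, x + 1 < B)
    (hB : 0 < B) (e : rk B η = rk B β) : η = β := by
  rcases shortlex_tri η β with h1 | h1 | h1
  · have := rk_shortlex B η β h hB h1
    omega
  · exact h1
  · have := rk_shortlex B β η h' hB h1
    omega

theorem rk_max (B M : ℕ) (hB : 0 < B) (η : List ℕ) (k : ℕ) (h : ∀ x ∈ η, x ≤ M)
    (hk : η.length ≤ k) : rk B η ≤ rk B (List.replicate k M) := by
  induction η generalizing k with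
  | nil => simp [rk]
  | cons x xs ih => cases k with
    | zero => simp at hk
    | succ k =>
      have hk' : xs.length ≤ k := by simpa using hk
      have h1 := ih k (fun y hy => h y (List.mem_cons_of_mem _ hy)) hk'
      have h2 : x ≤ M := h x (by simp)
      simp only [List.replicate_succ, rk, List.length_replicate]
      have h3 : (x + 1) * B ^ xs.length ≤ (M + 1) * B ^ k :=
        Nat.mul_le_mul (by omega) (Nat.pow_le_pow_right hB hk')
      omega

/-- Course-of-values recursion. -/
def cov (next : (n : ℕ) → ((m : ℕ) → m < n → List Bool) → List Bool) (n : ℕ) : List Bool :=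
  next n (fun m _ => cov next m)
termination_by n

theorem exists_seq_s7 (c : List Bool → ℕ) (L : Finset ℕ) (ρ : List Bool)
    (hL : ∀ σ, ρ <+: σ → ∀ x ∈ L, ∃ τ, σ <+: τ ∧ c τ = x)
    (B : ℕ) (hB : 0 < B) (hLB : ∀ x ∈ L, x + 1 < B) :
    ∃ s : ℕ → List Bool, ρ ++ [false] <+: s 0 ∧ (∀ n, s n ++ [false] <+: s (n + 1)) ∧
      ∀ η : List ℕ, η ≠ [] → (∀ x ∈ η, x ∈ L) →
        c (flipStr (s (rk B η)) ((Finset.range (η.length - 1)).image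
          fun j => (s (rk B (η.take (j + 1)))).length)) = η.getD (η.length - 1) 0 := by
  classical
  have hext : ∀ (σ : List Bool) (Q : Finset ℕ) (x : ℕ), ∃ τ, σ <+: τ ∧
      (ρ <+: σ → (∀ q ∈ Q, ρ.length ≤ q) → x ∈ L → c (flipStr τ Q) = x) := by
    intro σ Q x
    by_cases h : ρ <+: σ ∧ (∀ q ∈ Q, ρ.length ≤ q) ∧ x ∈ L
    · obtain ⟨h1, h2, h3⟩ := h
      have h4 := flip_prefix Q h1
      rw [flip_id ρ Q h2] at h4
      obtain ⟨t, ht, hc⟩ := hL _ h4 x h3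
      refine ⟨flipStr t Q, ?_, fun _ _ _ => by rw [flipS_flipS]; exact hc⟩
      have := flip_prefix Q ht
      rwa [flipS_flipS] at this
    · exact ⟨σ, List.prefix_refl _, fun a b d => absurd ⟨a, b, d⟩ h⟩
  choose ext hext1 hext2 using hext
  let dec : ℕ → List ℕ := fun n =>
    if h : ∃ η : List ℕ, (∀ x ∈ η, x ∈ L) ∧ rk B η = n then h.choose else []
  have hdec : ∀ η : List ℕ, (∀ x ∈ η, x ∈ L) → dec (rk B η) = η := by
    intro η hη
    have h : ∃ η' : List ℕ, (∀ x ∈ η', x ∈ L) ∧ rk B η' = rk B η := ⟨η, hη, rfl⟩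
    have e : dec (rk B η) = h.choose := dif_pos h
    rw [e]
    exact rk_inj B _ _ (fun x hx => hLB x (h.choose_spec.1 x hx)) (fun x hx => hLB x (hη x hx))
      hB h.choose_spec.2
  let prev : (n : ℕ) → ((m : ℕ) → m < n → List Bool) → List Bool := fun n f =>
    if h : n = 0 then ρ else f (n - 1) (by omega)
  let QQ : (n : ℕ) → ((m : ℕ) → m < n → List Bool) → Finset ℕ := fun n f =>
    (Finset.range ((dec n).length - 1)).image fun j =>
      if h : rk B ((dec n).take (j + 1)) < n then (f _ h).length else ρ.length
  let next : (n : ℕ) → ((m : ℕ) → m < n → List Bool) → List Bool := fun n f =>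
    ext (prev n f ++ [false]) (QQ n f) ((dec n).getD ((dec n).length - 1) 0)
  let s := cov next
  have hs : ∀ n, s n = ext (prev n (fun m _ => s m) ++ [false]) (QQ n (fun m _ => s m))
      ((dec n).getD ((dec n).length - 1) 0) := by
    intro n
    change cov next n = _
    rw [cov]
  have h0 : ρ ++ [false] <+: s 0 := by
    rw [hs 0]
    exact hext1 _ _ _
  have h1 : ∀ n, s n ++ [false] <+: s (n + 1) := by
    intro n
    rw [hs (n + 1)]
    exact hext1 (s n ++ [false]) _ _
  have hρ : ∀ n, ρ <+: s n := by
    intro n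
    induction n with
    | zero => exact (List.prefix_append _ _).trans h0
    | succ n ih => exact ih.trans ((List.prefix_append _ _).trans (h1 n))
  refine ⟨s, h0, h1, ?_⟩
  intro η hne hη
  have key := hext2 (prev (rk B η) (fun m _ => s m) ++ [false]) (QQ (rk B η) (fun m _ => s m))
      ((dec (rk B η)).getD ((dec (rk B η)).length - 1) 0)
  rw [← hs] at key
  have hQ : QQ (rk B η) (fun m _ => s m) = (Finset.range (η.length - 1)).image
          fun j => (s (rk B (η.take (j + 1)))).length := by
    simp only [QQ, hdec η hη]
    apply Finset.image_congr
    intro j hj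
    have hj' : j < η.length - 1 := by simpa using hj
    apply dif_pos
    apply rk_short B _ _ _ hB
    · simp; omega
    · intro x hx
      exact hLB x (hη x (List.mem_of_mem_take hx))
  rw [hQ, hdec η hη] at key
  apply key
  · refine List.IsPrefix.trans ?_ (List.prefix_append _ _)
    simp only [prev]
    split
    · exact List.prefix_refl _
    · exact hρ _
  · intro q hq
    simp only [Finset.mem_image] at hq
    obtain ⟨j, _, rfl⟩ := hq
    exact (hρ _).length_le
  · have : 0 < η.length := List.length_pos_iff.mpr hne
    rw [List.getD_eq_getElem _ _ (by omega)]
    exact hη _ (List.getElem_mem _)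

theorem exists_min (ℓ : ℕ) (c : List Bool → ℕ) (hc : ∀ σ, c σ < ℓ) (ρ : List Bool) :
    ∃ (ρ' : List Bool) (L : Finset ℕ), ρ <+: ρ' ∧ (∀ x ∈ L, x < ℓ) ∧
      (∀ σ, ρ' <+: σ → c σ ∈ L) ∧
      (∀ σ, ρ' <+: σ → ∀ x ∈ L, ∃ τ, σ <+: τ ∧ c τ = x) := by
  classical
  let A : List Bool → Finset ℕ := fun σ =>
    (Finset.range ℓ).filter fun x => ∃ τ, σ <+: τ ∧ c τ = x
  obtain ⟨ρ', h1, h2⟩ := WellFounded.has_min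
    (InvImage.wf (fun σ => (A σ).card) Nat.lt_wfRel.wf) {σ | ρ <+: σ} ⟨ρ, List.prefix_refl _⟩
  refine ⟨ρ', A ρ', h1, ?_, ?_, ?_⟩
  · intro x hx
    simp only [A, Finset.mem_filter, Finset.mem_range] at hx
    exact hx.1
  · intro σ hσ
    simp only [A, Finset.mem_filter, Finset.mem_range]
    exact ⟨hc σ, σ, hσ, rfl⟩
  · intro σ hσ x hx
    have hsub : A σ ⊆ A ρ' := by
      intro y hy
      simp only [A, Finset.mem_filter] at hy ⊢
      obtain ⟨hy1, τ, hy2, hy3⟩ := hy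
      exact ⟨hy1, τ, hσ.trans hy2, hy3⟩
    have hcard : ¬ (A σ).card < (A ρ').card := h2 σ (List.IsPrefix.trans h1 hσ)
    have := Finset.eq_of_subset_of_card_le hsub (by omega)
    rw [← this] at hx
    simp only [A, Finset.mem_filter] at hx
    exact hx.2

/-- The technical lemma (Lemma 3.4 of the paper). -/
theorem ovw_claim1 (ℓ : ℕ) (hℓ : 1 ≤ ℓ) (ctilde : List Bool → ℕ)
    (hc : ∀ σ, ctilde σ < ℓ) (ρ : List Bool) :
    ∃ (L : Finset ℕ) (τ : List ℕ → List Bool),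
      L.Nonempty ∧ (∀ x ∈ L, x < ℓ) ∧
      -- (1)
      (∀ η, ValidIdx L η → η.length = 1 → ρ <+: τ η ∧ ρ ≠ τ η) ∧
      (∀ η β, ValidIdx L η → ValidIdx L β →
        ((τ η <+: τ β ∧ τ η ≠ τ β) ↔ ShortLex η β)) ∧
      -- (2)
      (∀ η, ValidIdx L η → (rhoTilde L τ).getD (τ η).length true = false) ∧
      -- (3)
      (∀ η, ValidIdx L η →
        ctilde (flipStr (τ η)
            ((Finset.range (η.length - 1)).image fun j => (τ (η.take (j + 1))).length))
          = η.getD (η.length - 1) 0) ∧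
      -- (4)
      (∀ Q : Finset ℕ, (∀ q ∈ Q, ∃ η, ValidIdx L η ∧ q = (τ η).length) →
        ∀ σ : List Bool, rhoTilde L τ <+: σ → ctilde (flipStr σ Q) ∈ L) := by
  obtain ⟨ρ', L, hρρ', hLℓ, hmem, hdense⟩ := exists_min ℓ ctilde hc ρ
  have hLB : ∀ x ∈ L, x + 1 < ℓ + 1 := fun x hx => by have := hLℓ x hx; omega
  have hB : 0 < ℓ + 1 := by omega
  obtain ⟨s, h0, h1, h3⟩ := exists_seq_s7 ctilde L ρ' hdense (ℓ + 1) hB hLB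
  have hstep : ∀ m n, m < n → s m ++ [false] <+: s n := by
    intro m n hmn
    induction n, hmn using Nat.le_induction with
    | base => exact h1 m
    | succ n _ ih => exact ih.trans ((List.prefix_append _ _).trans (h1 n))
  have hlt : ∀ m n, m < n → (s m).length < (s n).length := by
    intro m n hmn
    have := (hstep m n hmn).length_le
    simp at this
    omega
  have hρ : ∀ n, ρ' ++ [false] <+: s n := by
    intro n
    rcases Nat.eq_zero_or_pos n with rfl | h
    · exact h0
    · exact h0.trans ((List.prefix_append _ _).trans (hstep 0 n h))
  have hne : L.Nonempty := ⟨_, hmem ρ' (List.prefix_refl _)⟩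
  refine ⟨L, fun η => s (rk (ℓ + 1) η), hne, hLℓ, ?_, ?_, ?_, ?_, ?_⟩
  · intro η _ _
    have h := hρ (rk (ℓ + 1) η)
    refine ⟨hρρ'.trans ((List.prefix_append _ _).trans h), ?_⟩
    intro e
    beta_reduce at e
    have a := h.length_le
    have b := hρρ'.length_le
    rw [← e] at a
    simp at a
    omega
  · intro η β hη hβ
    rw [← rk_iff (ℓ + 1) η β (fun x hx => hLB x (hη.2.2 x hx))
      (fun x hx => hLB x (hβ.2.2 x hx)) hB]
    beta_reduce
    constructor
    · rintro ⟨hp, hn⟩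
      by_contra hcon
      rcases Nat.lt_or_ge (rk (ℓ + 1) β) (rk (ℓ + 1) η) with h | h
      · have a := hlt _ _ h
        have b := hp.length_le
        omega
      · have e : rk (ℓ + 1) η = rk (ℓ + 1) β := by omega
        exact hn (by rw [e])
    · intro h
      refine ⟨(List.prefix_append _ _).trans (hstep _ _ h), fun e => ?_⟩
      have a := hlt _ _ h
      have e' := congrArg List.length e
      omega
  · intro η hη
    have hle : rk (ℓ + 1) η ≤ rk (ℓ + 1) (List.replicate (L.card + 1) (sSup (↑L : Set ℕ))) :=
      rk_max _ _ hB _ _ (fun x hx => le_csSup L.bddAbove (hη.2.2 x hx)) hη.2.1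
    have hp : s (rk (ℓ + 1) η) ++ [false] <+: rhoTilde L (fun η => s (rk (ℓ + 1) η)) := by
      unfold rhoTilde
      rcases hle.lt_or_eq with h | h
      · exact (hstep _ _ h).trans (List.prefix_append _ _)
      · rw [h]
    obtain ⟨t, ht⟩ := hp
    rw [← ht]
    simp
  · intro η hη
    exact h3 η hη.1 hη.2.2
  · intro Q hQ σ hσ
    apply hmem
    have h4 : ρ' <+: σ := by
      refine List.IsPrefix.trans ?_ hσ
      unfold rhoTilde
      exact (List.prefix_append _ _).trans ((hρ _).trans (List.prefix_append _ _))
    have h5 := flip_prefix Q h4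
    rwa [flip_id ρ' Q] at h5
    intro q hq
    obtain ⟨η, _, rfl⟩ := hQ q hq
    exact ((List.prefix_append _ _).trans (hρ _)).length_le
end

section
/- Let ℓ ≥ 1 and let c : 2^{<ω} → {0,…,ℓ−1} be a coloring of the finite binary strings. Suppose there exist an infinite binary sequence Y : ℕ → {0,1}, a sequence (P̃_i)_{i≥0} of nonempty finite subsets of ℕ with P̃_0 < P̃_1 < P̃_2 < ⋯ and Y(n) = 0 for every n ∈ ⋃_i P̃_i, and a color j < ℓ such that for every subset J ⊆ ℕ and every p ∈ {min P̃_i : i ≥ 1}, one has c((Y_{P̃_J}) ↾ p) = j, where P̃_J = ⋃_{i∈J} P̃_i. Then there exists an infinite ordered variable word over {0,1}, encoded by b : ℕ → {0,1} and nonempty finite sets F_1 < F_2 < ⋯, such that c(W(a)) = j for every k ≥ 0 and every a ∈ {0,1}^k. -/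
open Classical in
/-- `flipSeq Y F` flips the bits of the infinite binary sequence `Y` at positions in `F`. -/
noncomputable def flipSeq (Y : ℕ → Bool) (F : Set ℕ) : ℕ → Bool :=
  fun n => if n ∈ F then !Y n else Y n

/-- `seqTake Y p` is the initial segment of length `p` of the infinite binary sequence `Y`. -/
def seqTake (Y : ℕ → Bool) (p : ℕ) : List Bool := (List.range p).map Y

/-- From the homogeneous data `Y, (P̃_i), j` one obtains an infinite ordered variable word
whose instantiations all get color `j`. -/
theorem ovw_from_homogeneous_data (ℓ : ℕ) (hℓ : 1 ≤ ℓ) (c : List Bool → ℕ)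
    (hc : ∀ σ, c σ < ℓ) (Y : ℕ → Bool) (Pt : ℕ → Finset ℕ) (j : ℕ)
    (hne : ∀ i, (Pt i).Nonempty) (hinc : ∀ i, FinLT (Pt i) (Pt (i + 1)))
    (hY : ∀ i, ∀ n ∈ Pt i, Y n = false) (hj : j < ℓ)
    (hhom : ∀ J : Set ℕ, ∀ i, 1 ≤ i →
      c (seqTake (flipSeq Y (⋃ k ∈ J, (↑(Pt k) : Set ℕ))) (sInf (↑(Pt i) : Set ℕ))) = j) :
    ∃ (b : ℕ → Bool) (F : ℕ → Finset ℕ),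
      (∀ k, (F k).Nonempty) ∧ (∀ k, FinLT (F k) (F (k + 1))) ∧
      ∀ a : List Bool, c (instWord b F a) = j := by
  have hlt : ∀ d i, FinLT (Pt i) (Pt (i + d + 1)) := by
    intro d
    induction d with
    | zero => intro i; exact hinc i
    | succ d ih =>
      intro i x hx y hy
      obtain ⟨z, hz⟩ := hne (i + d + 1)
      exact (ih i x hx z hz).trans (hinc (i + d + 1) z hz y hy)
  have hdis : ∀ i k n, n ∈ Pt i → n ∈ Pt k → i = k := by
    intro i k n hi hk
    rcases lt_trichotomy i k with h | h | h
    · obtain ⟨d, rfl⟩ := Nat.exists_eq_add_of_lt h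
      exact absurd (hlt d i n hi n hk) (lt_irrefl _)
    · exact h
    · obtain ⟨d, rfl⟩ := Nat.exists_eq_add_of_lt h
      exact absurd (hlt d k n hk n hi) (lt_irrefl _)
  refine ⟨Y, fun k => Pt (k + 1), fun k => hne _, fun k => hinc _, fun a => ?_⟩
  rw [← hhom {k | ∃ i, i < a.length ∧ k = i + 1 ∧ a.getD i false = true} (a.length + 1) (by omega)]
  congr 1
  unfold instWord seqTake
  refine List.map_congr_left fun n _ => ?_
  unfold flipSeq
  split_ifs with h h2 h2
  · simp only [Set.mem_iUnion, Set.mem_setOf_eq, Finset.mem_coe] at h2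
    obtain ⟨k, ⟨i, hi, rfl, ha⟩, hk⟩ := h2
    have h3 := hdis _ _ n (Nat.find_spec h).2 hk
    have h4 : Nat.find h = i := by omega
    rw [h4, ha, hY _ n hk]; rfl
  · rw [hY _ n (Nat.find_spec h).2]
    by_contra h5
    apply h2
    simp only [Set.mem_iUnion, Set.mem_setOf_eq, Finset.mem_coe]
    exact ⟨_, ⟨Nat.find h, (Nat.find_spec h).1, rfl, by simpa using h5⟩, (Nat.find_spec h).2⟩
  · simp only [Set.mem_iUnion, Set.mem_setOf_eq, Finset.mem_coe] at h2
    obtain ⟨k, ⟨i, hi, rfl, ha⟩, hk⟩ := h2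
    exact absurd ⟨i, hi, hk⟩ h
  · rfl
end
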